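/- Let N ≥ 2, 1 < p < N and p − 1 < q < q_c, and let u be a strong solution of (E) on ℝ^N ∖ {0} with u ≥ 0 on ℝ^N ∖ {0}. Then u is radial (u(x) depends only on |x|) and at least one of the following holds: (i) there exists M ≥ 0 with u(x) = M for all x ≠ 0; (ii) there exist k > 0 and M ≥ 0 such that u(x) = ∫_{|x|}^∞ s^{(1−N)/(p−1)} ( b^{−1} s^{(q+1−p)b/(p−1)} + k^{p−1−q} )^{−1/(q+1−p)} ds + M for all x ≠ 0; (iii) there exists M ≥ 0 such that u(x) = λ_{N,p,q} |x|^{−β_q} + M for all x ≠ 0. -/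

import Mathlib

open Metric Set Filter Topology MeasureTheory

/-- The vector field `x ↦ |∇u(x)|^{p-2} ∇u(x)`. -/
noncomputable def pGradField {N : ℕ} (p : ℝ) (u : EuclideanSpace ℝ (Fin N) → ℝ)
    (x : EuclideanSpace ℝ (Fin N)) : EuclideanSpace ℝ (Fin N) :=
  ‖gradient u x‖ ^ (p - 2) • gradient u x

/-- A strong solution of `(E) : -Δ_p u + |∇u|^q = 0` on an open set `G ⊆ ℝ^N`. -/
def IsStrongSolution {N : ℕ} (p q : ℝ) (G : Set (EuclideanSpace ℝ (Fin N)))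
    (u : EuclideanSpace ℝ (Fin N) → ℝ) : Prop :=
  ContDiffOn ℝ 1 u G ∧
  ContDiffOn ℝ 3 u {x | x ∈ G ∧ gradient u x ≠ 0} ∧
  ∀ x ∈ G, DifferentiableAt ℝ (pGradField p u) x ∧
    LinearMap.trace ℝ (EuclideanSpace ℝ (Fin N))
      (fderiv ℝ (pGradField p u) x : EuclideanSpace ℝ (Fin N) →ₗ[ℝ] EuclideanSpace ℝ (Fin N))
      = ‖gradient u x‖ ^ q

/-!
Bernstein's method, applied at a maximum of `(r² - |y - x₀|²)^α |∇u| / u` on a ball, gives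
`|∇u(x₀)| ≤ K u(x₀) / r`, hence a Harnack inequality on spheres; applied to `u + u(x₀)` it gives the
universal bound `|∇u(x)| ≤ K |x| ^ (-1 / (q + 1 - p))`. Since `q < p`, the latter is integrable at
infinity and `u` has a limit `M ≥ 0` there.

At the origin there is a dichotomy. If `u` does not tend to `∞`, then by Harnack's inequality it is
bounded on arbitrarily small spheres; comparison with small multiples of the fundamental solution of
the `p`-Laplacian gives `u ≤ M`, comparison with flatter radial powers gives `M ≤ u`, and `u` is
constant. If `u → ∞`, let `R` be the reflection across a hyperplane that misses the origin. Since
`q > p - 1`, the function `(1 + ε) u ∘ R` is a strict supersolution, so it dominates `u` on the side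
of the hyperplane away from the origin. Letting `ε → 0` and moving the hyperplane to the origin
shows that `u` is symmetric, hence radial.

For radial `u = f(|x|)` the flux `Y = r ^ (n - 1) |f'| ^ (p - 2) f'` solves an equation of the form
`Y' = r ^ (κ - 1) |Y| ^ (1 + σ)`, which separates: either `Y = 0`, or `Y < 0` and `|Y| ^ (-σ)` is
explicit up to an additive constant `C ≥ 0`; the cases `Y = 0`, `C > 0`, `C = 0` give the three
families.
-/

open scoped Gradient RealInnerProductSpace
open Module (finrank)
open InnerProductSpace (rankOne)

section Calculus

variable {E : Type*} [NormedAddCommGroup E] [InnerProductSpace ℝ E] [CompleteSpace E]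
  {f' g' x : E} {f g u : E → ℝ}

/-- The Hessian of `u`, encoded as the derivative of its gradient field. -/
noncomputable def hessian (u : E → ℝ) : E → E →L[ℝ] E := fderiv ℝ (∇ u)

lemma hasGradientAt_sub (hf : HasGradientAt f f' x) (hg : HasGradientAt g g' x) :
    HasGradientAt (fun y => f y - g y) (f' - g') x := by
  simpa only [hasGradientAt_iff_hasFDerivAt, map_sub] using hf.hasFDerivAt.fun_sub hg.hasFDerivAt

lemma hasGradientAt_add (hf : HasGradientAt f f' x) (hg : HasGradientAt g g' x) :
    HasGradientAt (fun y => f y + g y) (f' + g') x := by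
  simpa only [hasGradientAt_iff_hasFDerivAt, map_add] using hf.hasFDerivAt.fun_add hg.hasFDerivAt

lemma hasGradientAt_comp_of_hasDerivAt {φ : ℝ → ℝ} {φ' : ℝ} (hφ : HasDerivAt φ φ' (f x))
    (hf : HasGradientAt f f' x) : HasGradientAt (fun y => φ (f y)) (φ' • f') x := by
  simpa [hasGradientAt_iff_hasFDerivAt] using! hφ.comp_hasFDerivAt x hf.hasFDerivAt

lemma gradient_const_mul (c : ℝ) (u : E → ℝ) (x : E) : ∇ (fun y => c * u y) x = c • ∇ u x := by
  refine ext_inner_right ℝ fun v => ?_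
  rw [inner_gradient_left, inner_smul_left, inner_gradient_left,
    show (fun y => c * u y) = c • u from rfl, fderiv_const_smul_field]
  rfl

lemma gradient_neg (u : E → ℝ) (x : E) : ∇ (fun y => -u y) x = -∇ u x := by
  simpa using gradient_const_mul (-1) u x

lemma gradient_add_const (u : E → ℝ) (c : ℝ) (x : E) : ∇ (fun y => u y + c) x = ∇ u x := by
  simp only [gradient, fderiv_add_const]

lemma gradient_comp_add_right (u : E → ℝ) (a x : E) :
    ∇ (fun y => u (y + a)) x = ∇ u (x + a) := by
  simp only [gradient, fderiv_comp_add_right]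

lemma gradient_comp_linearIsometryEquiv (L : E ≃ₗᵢ[ℝ] E) (u : E → ℝ) (x : E) :
    ∇ (fun y => u (L y)) x = L.symm (∇ u (L x)) := by
  refine ext_inner_right ℝ fun v => ?_
  rw [inner_gradient_left, LinearIsometryEquiv.inner_map_eq_flip, L.symm_symm, inner_gradient_left,
    show (fun y => u (L y)) = u ∘ L.toContinuousLinearEquiv from rfl,
    ContinuousLinearEquiv.comp_right_fderiv]
  rfl

lemma contDiffAt_gradient {m n : WithTop ℕ∞} (h : ContDiffAt ℝ n u x) (hmn : m + 1 ≤ n) :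
    ContDiffAt ℝ m (∇ u) x :=
  (InnerProductSpace.toDual ℝ E).symm.contDiff.contDiffAt.comp x (h.fderiv_right hmn)

lemma hasFDerivAt_gradient (h : ContDiffAt ℝ 2 u x) : HasFDerivAt (∇ u) (hessian u x) x :=
  ((contDiffAt_gradient (m := 1) h (by norm_num)).differentiableAt (by norm_num)).hasFDerivAt

lemma hasFDerivAt_hessian (h : ContDiffAt ℝ 3 u x) :
    HasFDerivAt (hessian u) (fderiv ℝ (hessian u) x) x :=
  (((contDiffAt_gradient (m := 2) h (by norm_num)).fderiv_right (m := 1)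
    (by norm_num)).differentiableAt (by norm_num)).hasFDerivAt

lemma inner_hessian_apply (h : ContDiffAt ℝ 2 u x) (v w : E) :
    ⟪hessian u x v, w⟫ = fderiv ℝ (fderiv ℝ u) x v w := by
  have hu : HasFDerivAt (fderiv ℝ u) (fderiv ℝ (fderiv ℝ u) x) x :=
    ((h.fderiv_right (m := 1) (by norm_num)).differentiableAt (by norm_num)).hasFDerivAt
  have hleft := (hasFDerivAt_gradient h).inner ℝ (hasFDerivAt_const w x)
  simp only [inner_gradient_left] at hleft
  simpa using DFunLike.congr_fun (hleft.unique (hu.clm_apply (hasFDerivAt_const w x))) v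

lemma isSymmetric_hessian (h : ContDiffAt ℝ 2 u x) : (hessian u x : E →ₗ[ℝ] E).IsSymmetric := by
  intro v w
  rw [ContinuousLinearMap.coe_coe, real_inner_comm (hessian u x w) v, inner_hessian_apply h,
    inner_hessian_apply h]
  exact (h.isSymmSndFDerivAt (by simp)).eq v w

lemma fderiv_hessian_comm (h : ContDiffAt ℝ 3 u x) (v w : E) :
    fderiv ℝ (hessian u) x v w = fderiv ℝ (hessian u) x w v :=
  ((contDiffAt_gradient (m := 2) h (by norm_num)).isSymmSndFDerivAt (by simp)).eq v w

lemma hasDerivAt_add_smul {F : Type*} [NormedAddCommGroup F] [NormedSpace ℝ F] (x v : F) (t : ℝ) :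
    HasDerivAt (fun t : ℝ => x + t • v) v t := by
  simpa using ((hasDerivAt_id t).smul_const v).const_add x

lemma nonpos_of_isLocalMax_of_hasDerivAt {f f' : ℝ → ℝ} {c t₀ : ℝ}
    (hf : ∀ᶠ t in 𝓝 t₀, HasDerivAt f (f' t) t) (hf' : HasDerivAt f' c t₀)
    (hmax : IsLocalMax f t₀) : c ≤ 0 := by
  by_contra! hc
  have hderiv : deriv f =ᶠ[𝓝 t₀] f' := hf.mono fun t ht => ht.deriv
  have hsecond : deriv (deriv f) t₀ = c := hderiv.deriv_eq.trans hf'.deriv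
  have hmin : IsLocalMin f t₀ := isLocalMin_of_deriv_deriv_pos (hsecond ▸ hc) hmax.deriv_eq_zero
    hf.self_of_nhds.continuousAt
  have hconst : f =ᶠ[𝓝 t₀] fun _ => f t₀ := by
    filter_upwards [hmin, hmax] with t h₁ h₂ using h₂.antisymm h₁
  have : deriv f =ᶠ[𝓝 t₀] fun _ => 0 := by simpa using! hconst.deriv
  exact hc.ne' (hsecond.symm.trans (by simpa using this.deriv_eq))

lemma inner_nonpos_of_isLocalMax {V : E → E} {Q : E →L[ℝ] E}
    (hf : ∀ᶠ y in 𝓝 x, HasGradientAt f (V y) y) (hV : HasFDerivAt V Q x) (hmax : IsLocalMax f x)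
    (v : E) : ⟪v, Q v⟫ ≤ 0 := by
  have hline : Tendsto (fun t : ℝ => x + t • v) (𝓝 0) (𝓝 x) := by
    simpa using (hasDerivAt_add_smul x v 0).continuousAt.tendsto
  refine nonpos_of_isLocalMax_of_hasDerivAt (f := fun t => f (x + t • v))
    (f' := fun t => ⟪v, V (x + t • v)⟫) (t₀ := 0) ?_ ?_ ?_
  · filter_upwards [hline.eventually hf] with t ht
    simpa [real_inner_comm] using! ht.hasFDerivAt.comp_hasDerivAt t (hasDerivAt_add_smul x v t)
  · have hV' : HasFDerivAt V Q (x + (0 : ℝ) • v) := by simpa using hV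
    simpa using (hasDerivAt_const (0 : ℝ) v).inner ℝ
      (hV'.comp_hasDerivAt 0 (hasDerivAt_add_smul x v 0))
  · simpa [IsLocalMax, IsMaxFilter] using hline.eventually hmax

lemma gradient_eq_of_isLocalMax_sub (hf : DifferentiableAt ℝ f x) (hg : DifferentiableAt ℝ g x)
    (hmax : IsLocalMax (fun y => f y - g y) x) : ∇ f x = ∇ g x := by
  have hzero : fderiv ℝ (fun y => f y - g y) x = 0 := hmax.fderiv_eq_zero
  rw [fderiv_fun_sub hf hg, sub_eq_zero] at hzero
  rw [gradient, hzero, gradient]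

end Calculus

section Trace

variable {E : Type*} [NormedAddCommGroup E] [InnerProductSpace ℝ E] {p : ℝ} {v n : E}
  {A H : E →L[ℝ] E}

lemma sq_inner_add_sq_inner_le_norm_sq {ι : Type*} [Fintype ι] (b : OrthonormalBasis ι ℝ E)
    {i j : ι} (hij : i ≠ j) (v : E) : ⟪b i, v⟫ ^ 2 + ⟪b j, v⟫ ^ 2 ≤ ‖v‖ ^ 2 := by
  classical
  rw [← b.sum_sq_norm_inner_right v, ← Finset.sum_pair (f := fun k => ⟪b k, v⟫ ^ 2) hij]
  simp only [Real.norm_eq_abs, sq_abs]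
  exact Finset.sum_le_sum_of_subset_of_nonneg (Finset.subset_univ _) fun _ _ _ => sq_nonneg _

lemma inner_apply_apply_of_isSymmetric (hH : (H : E →ₗ[ℝ] E).IsSymmetric) (v : E) :
    ⟪v, H (H v)⟫ = ‖H v‖ ^ 2 := by
  rw [← real_inner_self_eq_norm_sq]
  exact (hH v (H v)).symm

lemma inner_inv_norm_smul_apply (A : E →L[ℝ] E) (v : E) :
    ⟪‖v‖⁻¹ • v, A (‖v‖⁻¹ • v)⟫ = ⟪v, A v⟫ / ‖v‖ ^ 2 := by
  rw [map_smul, real_inner_smul_left, real_inner_smul_right]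
  ring

variable [FiniteDimensional ℝ E]

/-- The trace as a continuous linear functional on endomorphisms. -/
noncomputable def traceCLM : (E →L[ℝ] E) →L[ℝ] ℝ :=
  (LinearMap.trace ℝ E ∘ₗ ContinuousLinearMap.coeLM ℝ).toContinuousLinearMap

lemma traceCLM_apply (A : E →L[ℝ] E) : traceCLM A = LinearMap.trace ℝ E (A : E →ₗ[ℝ] E) := rfl

lemma traceCLM_eq_sum_inner {ι : Type*} [Fintype ι] (b : OrthonormalBasis ι ℝ E)
    (A : E →L[ℝ] E) : traceCLM A = ∑ i, ⟪b i, A (b i)⟫ :=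
  LinearMap.trace_eq_sum_inner (A : E →ₗ[ℝ] E) b

lemma traceCLM_id : traceCLM (ContinuousLinearMap.id ℝ E) = finrank ℝ E := by
  simp [traceCLM_apply]

lemma traceCLM_rankOne (v w : E) : traceCLM (rankOne ℝ v w) = ⟪w, v⟫ :=
  InnerProductSpace.trace_rankOne v w

lemma exists_orthonormalBasis_apply_eq (hn : ‖n‖ = 1) :
    ∃ (s : Finset E) (b : OrthonormalBasis s ℝ E) (i : s), b i = n := by
  have hsingle : Orthonormal ℝ ((↑) : ({n} : Set E) → E) := by simp [hn]
  obtain ⟨s, b, hns, hb⟩ := hsingle.exists_orthonormalBasis_extension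
  exact ⟨s, b, ⟨n, hns rfl⟩, by rw [hb]⟩

lemma traceCLM_le_inner_of_nonpos (hA : ∀ w, ⟪w, A w⟫ ≤ 0) (hn : ‖n‖ = 1) :
    traceCLM A ≤ ⟪n, A n⟫ := by
  classical
  obtain ⟨s, b, i, rfl⟩ := exists_orthonormalBasis_apply_eq hn
  rw [traceCLM_eq_sum_inner b, ← Finset.add_sum_erase _ _ (Finset.mem_univ i)]
  linarith [Finset.sum_nonpos fun j (_ : j ∈ Finset.univ.erase i) => hA (b j)]

-- Keep the row and the column of `n` exactly; apply Cauchy–Schwarz to the remaining diagonal.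
lemma le_traceCLM_comp_self_of_norm_eq_one (hH : (H : E →ₗ[ℝ] E).IsSymmetric) (hn : ‖n‖ = 1) :
    2 * ‖H n‖ ^ 2 - ⟪n, H n⟫ ^ 2 + (traceCLM H - ⟪n, H n⟫) ^ 2 / (finrank ℝ E - 1) ≤
      traceCLM (H.comp H) := by
  classical
  obtain ⟨s, b, i, rfl⟩ := exists_orthonormalBasis_apply_eq hn
  have hsymm (j : s) : ⟪b j, H (b i)⟫ = ⟪b i, H (b j)⟫ := by
    rw [real_inner_comm]; exact hH (b i) (b j)
  have hsplit (f : s → ℝ) : ∑ j, f j = f i + ∑ j ∈ Finset.univ.erase i, f j :=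
    (Finset.add_sum_erase _ _ (Finset.mem_univ i)).symm
  have hcolumn : ‖H (b i)‖ ^ 2 =
      ⟪b i, H (b i)⟫ ^ 2 + ∑ j ∈ Finset.univ.erase i, ⟪b i, H (b j)⟫ ^ 2 := by
    rw [← b.sum_sq_norm_inner_right, ← hsplit fun j => ⟪b i, H (b j)⟫ ^ 2]
    simp only [Real.norm_eq_abs, sq_abs, hsymm]
  have hdiag : (traceCLM H - ⟪b i, H (b i)⟫) ^ 2 / (finrank ℝ E - 1) ≤
      ∑ j ∈ Finset.univ.erase i, ⟪b j, H (b j)⟫ ^ 2 := by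
    rw [traceCLM_eq_sum_inner b, hsplit, add_sub_cancel_left]
    refine div_le_of_le_mul₀ ?_ (Finset.sum_nonneg fun _ _ => sq_nonneg _) ?_
    · have : 0 < Fintype.card s := Fintype.card_pos_iff.2 ⟨i⟩
      rw [sub_nonneg, Module.finrank_eq_card_basis b.toBasis]
      exact_mod_cast this
    · refine sq_sum_le_card_mul_sum_sq.trans_eq ?_
      rw [Finset.card_erase_of_mem (Finset.mem_univ i), Finset.card_univ,
        Nat.cast_pred (Fintype.card_pos_iff.2 ⟨i⟩), Module.finrank_eq_card_basis b.toBasis,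
        mul_comm]
  have hrest : ∑ j ∈ Finset.univ.erase i, (⟪b i, H (b j)⟫ ^ 2 + ⟪b j, H (b j)⟫ ^ 2) ≤
      ∑ j ∈ Finset.univ.erase i, ‖H (b j)‖ ^ 2 :=
    Finset.sum_le_sum fun j hj =>
      sq_inner_add_sq_inner_le_norm_sq b (Finset.ne_of_mem_erase hj).symm _
  have htrace : traceCLM (H.comp H) = ∑ j, ‖H (b j)‖ ^ 2 := by
    simp only [traceCLM_eq_sum_inner b, ← real_inner_self_eq_norm_sq]
    exact Finset.sum_congr rfl fun j _ => (hH (b j) (H (b j))).symm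
  rw [Finset.sum_add_distrib] at hrest
  rw [htrace, hsplit]
  linarith

lemma le_traceCLM_comp_self (hH : (H : E →ₗ[ℝ] E).IsSymmetric) (hv : v ≠ 0) :
    2 * (‖H v‖ ^ 2 / ‖v‖ ^ 2) - (⟪v, H v⟫ / ‖v‖ ^ 2) ^ 2 +
      (traceCLM H - ⟪v, H v⟫ / ‖v‖ ^ 2) ^ 2 / (finrank ℝ E - 1) ≤ traceCLM (H.comp H) := by
  have hunit : ‖‖v‖⁻¹ • v‖ = 1 := norm_smul_inv_norm (𝕜 := ℝ) hv
  have hnorm : ‖H (‖v‖⁻¹ • v)‖ ^ 2 = ‖H v‖ ^ 2 / ‖v‖ ^ 2 := by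
    rw [map_smul, norm_smul, norm_inv, norm_norm, mul_pow, inv_pow, inv_mul_eq_div]
  simpa only [hnorm, inner_inv_norm_smul_apply] using
    le_traceCLM_comp_self_of_norm_eq_one hH hunit

/-- The principal part `A ↦ tr A + (p - 2) ⟪v, A v⟫ / |v|²` of the `p`-Laplacian at a point where
the gradient is `v`. -/
noncomputable def pTrace (p : ℝ) (v : E) : (E →L[ℝ] E) →L[ℝ] ℝ :=
  traceCLM + ((p - 2) / ‖v‖ ^ 2) • (innerSL ℝ v).comp (ContinuousLinearMap.apply ℝ E v)

lemma pTrace_apply (p : ℝ) (v : E) (A : E →L[ℝ] E) :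
    pTrace p v A = traceCLM A + (p - 2) * (⟪v, A v⟫ / ‖v‖ ^ 2) := by
  simp only [pTrace, add_apply, smul_apply, ContinuousLinearMap.comp_apply, innerSL_apply_apply,
    ContinuousLinearMap.apply_apply, smul_eq_mul]
  ring

lemma pTrace_nonpos (hp : 1 ≤ p) (hv : v ≠ 0) (hA : ∀ w, ⟪w, A w⟫ ≤ 0) : pTrace p v A ≤ 0 := by
  have hunit : ‖‖v‖⁻¹ • v‖ = 1 := norm_smul_inv_norm (𝕜 := ℝ) hv
  have htrace := traceCLM_le_inner_of_nonpos hA hunit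
  have hdiag : ⟪v, A v⟫ / ‖v‖ ^ 2 ≤ 0 := div_nonpos_of_nonpos_of_nonneg (hA v) (by positivity)
  rw [pTrace_apply]
  rw [inner_inv_norm_smul_apply] at htrace
  nlinarith

lemma pTrace_id (p : ℝ) (hv : v ≠ 0) :
    pTrace p v (ContinuousLinearMap.id ℝ E) = finrank ℝ E + p - 2 := by
  rw [pTrace_apply, traceCLM_id, ContinuousLinearMap.id_apply, real_inner_self_eq_norm_sq,
    div_self (by positivity)]
  ring

lemma pTrace_rankOne (p : ℝ) (v w : E) :
    pTrace p v (rankOne ℝ w w) = ‖w‖ ^ 2 + (p - 2) * (⟪v, w⟫ ^ 2 / ‖v‖ ^ 2) := by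
  rw [pTrace_apply, traceCLM_rankOne, real_inner_self_eq_norm_sq,
    InnerProductSpace.rankOne_apply, real_inner_smul_right, real_inner_comm, ← sq]

lemma pTrace_rankOne_le (hp : 1 ≤ p) (v w : E) : pTrace p v (rankOne ℝ w w) ≤ p * ‖w‖ ^ 2 := by
  have hcs : ⟪v, w⟫ ^ 2 / ‖v‖ ^ 2 ≤ ‖w‖ ^ 2 := by
    refine div_le_of_le_mul₀ (by positivity) (by positivity) ?_
    calc ⟪v, w⟫ ^ 2 = |⟪v, w⟫| ^ 2 := (sq_abs _).symm
      _ ≤ (‖v‖ * ‖w‖) ^ 2 := by gcongr; exact abs_real_inner_le_norm v w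
      _ = ‖w‖ ^ 2 * ‖v‖ ^ 2 := by ring
  have hnonneg : 0 ≤ ⟪v, w⟫ ^ 2 / ‖v‖ ^ 2 := by positivity
  rw [pTrace_rankOne]
  nlinarith

end Trace

section PLaplacian

variable {E : Type*} [NormedAddCommGroup E] [InnerProductSpace ℝ E] {p : ℝ} {x : E}

lemma hasFDerivAt_norm_rpow_of_ne_zero {F : E → E} {H : E →L[ℝ] E} (hF : HasFDerivAt F H x)
    (h0 : F x ≠ 0) (s : ℝ) :
    HasFDerivAt (fun y => ‖F y‖ ^ s)
      ((s * ‖F x‖ ^ (s - 2)) • (innerSL ℝ (F x)).comp H) x := by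
  have hrpow (a : E) (t : ℝ) : (‖a‖ ^ 2) ^ t = ‖a‖ ^ (2 * t) := by
    rw [Real.rpow_mul (norm_nonneg a), Real.rpow_two]
  have hsq := hF.norm_sq.rpow_const (p := s / 2) (Or.inl (by positivity))
  simp only [hrpow, show 2 * (s / 2) = s by ring] at hsq
  refine hsq.congr_fderiv ?_
  rw [show 2 * (s / 2 - 1) = s - 2 by ring, ← Nat.cast_smul_eq_nsmul ℝ, smul_smul]
  congr 1
  push_cast
  ring

lemma hasFDerivAt_norm_rpow_smul {F : E → E} {H : E →L[ℝ] E} (hF : HasFDerivAt F H x)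
    (h0 : F x ≠ 0) (s : ℝ) :
    HasFDerivAt (fun y => ‖F y‖ ^ s • F y)
      (‖F x‖ ^ s • (H + (s / ‖F x‖ ^ 2) • ((innerSL ℝ (F x)).comp H).smulRight (F x))) x := by
  have hpos : 0 < ‖F x‖ := norm_pos_iff.2 h0
  refine ((hasFDerivAt_norm_rpow_of_ne_zero hF h0 s).smul hF).congr_fderiv ?_
  ext1 v
  simp only [smul_apply, add_apply, ContinuousLinearMap.smulRight_apply, smul_add, smul_smul,
    smul_eq_mul, Real.rpow_sub hpos, Real.rpow_two]
  congr 2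
  ring

variable [FiniteDimensional ℝ E] {u w : E → ℝ}

/-- The flux `|∇u|^{p-2} ∇u`; on `EuclideanSpace` this is `pGradField`. -/
noncomputable def pFlux (p : ℝ) (u : E → ℝ) (x : E) : E := ‖∇ u x‖ ^ (p - 2) • ∇ u x

/-- The `p`-Laplacian, as the pointwise divergence of the flux. -/
noncomputable def pLaplacian (p : ℝ) (u : E → ℝ) (x : E) : ℝ := traceCLM (fderiv ℝ (pFlux p u) x)

lemma pLaplacian_eq (hu : ContDiffAt ℝ 2 u x) (h0 : ∇ u x ≠ 0) :
    pLaplacian p u x = ‖∇ u x‖ ^ (p - 2) * pTrace p (∇ u x) (hessian u x) := by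
  have hflux : HasFDerivAt (pFlux p u) _ x :=
    hasFDerivAt_norm_rpow_smul (hasFDerivAt_gradient hu) h0 (p - 2)
  rw [pLaplacian, hflux.fderiv, map_smul, smul_eq_mul, map_add, map_smul, pTrace_apply,
    traceCLM_apply (ContinuousLinearMap.smulRight _ _), ContinuousLinearMap.coe_smulRight,
    LinearMap.trace_smulRight]
  simp only [ContinuousLinearMap.coe_coe, ContinuousLinearMap.comp_apply, innerSL_apply_apply,
    smul_eq_mul]
  ring

lemma pLaplacian_const_mul (p : ℝ) {c : ℝ} (hc : 0 < c) (u : E → ℝ) (x : E) :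
    pLaplacian p (fun y => c * u y) x = c ^ (p - 1) * pLaplacian p u x := by
  have hflux : pFlux p (fun y => c * u y) = c ^ (p - 1) • pFlux p u := by
    ext1 y
    simp only [pFlux, gradient_const_mul, norm_smul, Real.norm_eq_abs, abs_of_pos hc,
      Pi.smul_apply, smul_smul]
    rw [Real.mul_rpow hc.le (norm_nonneg _), show p - 1 = (p - 2) + 1 by ring,
      Real.rpow_add_one hc.ne', mul_right_comm]
  simp only [pLaplacian, hflux, fderiv_const_smul_field, Pi.smul_apply, map_smul, smul_eq_mul]

lemma pLaplacian_neg (p : ℝ) (u : E → ℝ) (x : E) :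
    pLaplacian p (fun y => -u y) x = -pLaplacian p u x := by
  have hflux : pFlux p (fun y => -u y) = -pFlux p u := by
    ext1 y
    simp only [pFlux, gradient_neg, norm_neg, smul_neg, Pi.neg_apply]
  simp only [pLaplacian, hflux, fderiv_neg, map_neg]

lemma pLaplacian_add_const (p : ℝ) (u : E → ℝ) (c : ℝ) (x : E) :
    pLaplacian p (fun y => u y + c) x = pLaplacian p u x := by
  have hflux : pFlux p (fun y => u y + c) = pFlux p u := by
    ext1 y
    simp only [pFlux, gradient_add_const]
  rw [pLaplacian, hflux, pLaplacian]

lemma pLaplacian_comp_add_right (p : ℝ) (u : E → ℝ) (a x : E) :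
    pLaplacian p (fun y => u (y + a)) x = pLaplacian p u (x + a) := by
  have hflux : pFlux p (fun y => u (y + a)) = fun y => pFlux p u (y + a) := by
    ext1 y
    simp only [pFlux, gradient_comp_add_right]
  simp only [pLaplacian, hflux, fderiv_comp_add_right]

lemma pLaplacian_comp_linearIsometryEquiv (p : ℝ) (L : E ≃ₗᵢ[ℝ] E) (u : E → ℝ) (x : E) :
    pLaplacian p (fun y => u (L y)) x = pLaplacian p u (L x) := by
  have hflux : pFlux p (fun y => u (L y)) =
      L.symm.toContinuousLinearEquiv ∘ (pFlux p u ∘ L.toContinuousLinearEquiv) := by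
    ext1 y
    simp [pFlux, gradient_comp_linearIsometryEquiv]
  rw [pLaplacian, hflux, ContinuousLinearEquiv.comp_fderiv, ContinuousLinearEquiv.comp_right_fderiv]
  exact LinearMap.trace_conj' (fderiv ℝ (pFlux p u) (L x) : E →ₗ[ℝ] E) L.symm.toLinearEquiv

lemma pLaplacian_le_of_isLocalMax_sub (hp : 1 ≤ p) (hu : ContDiffAt ℝ 2 u x)
    (hw : ContDiffAt ℝ 2 w x) (hmax : IsLocalMax (fun y => u y - w y) x) (h0 : ∇ w x ≠ 0) :
    pLaplacian p u x ≤ pLaplacian p w x := by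
  have hgrad : ∇ u x = ∇ w x := gradient_eq_of_isLocalMax_sub
    (hu.differentiableAt (by norm_num)) (hw.differentiableAt (by norm_num)) hmax
  have hfield : ∀ᶠ y in 𝓝 x, HasGradientAt (fun y => u y - w y) (∇ u y - ∇ w y) y := by
    filter_upwards [hu.eventually (by simp), hw.eventually (by simp)] with y huy hwy
    exact hasGradientAt_sub (huy.differentiableAt (by norm_num)).hasGradientAt
      (hwy.differentiableAt (by norm_num)).hasGradientAt
  have hle : pTrace p (∇ w x) (hessian u x - hessian w x) ≤ 0 := pTrace_nonpos hp h0
    (inner_nonpos_of_isLocalMax hfield ((hasFDerivAt_gradient hu).sub (hasFDerivAt_gradient hw))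
      hmax)
  rw [map_sub, sub_nonpos] at hle
  rw [pLaplacian_eq hu (hgrad ▸ h0), pLaplacian_eq hw h0, hgrad]
  gcongr

end PLaplacian

section StrongSolutionsAtAPoint

variable {E : Type*} [NormedAddCommGroup E] [InnerProductSpace ℝ E] [FiniteDimensional ℝ E]
  {p q : ℝ} {u : E → ℝ} {x : E}

/-- The pointwise version of `IsStrongSolution`: at `x`, the function `u` solves
`-Δ_p u + |∇u|^q = 0` and has the regularity of strong solutions. -/
def SolvesAt (p q : ℝ) (u : E → ℝ) (x : E) : Prop :=
  ContDiffAt ℝ 1 u x ∧ (∇ u x ≠ 0 → ContDiffAt ℝ 3 u x) ∧ pLaplacian p u x = ‖∇ u x‖ ^ q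

lemma eventually_gradient_ne (hu : ContDiffAt ℝ 1 u x) (h0 : ∇ u x ≠ 0) :
    ∀ᶠ y in 𝓝 x, ∇ u y ≠ 0 :=
  (contDiffAt_gradient (m := 0) hu (by norm_num)).continuousAt.eventually_ne h0

lemma SolvesAt.add_const (h : SolvesAt p q u x) (c : ℝ) : SolvesAt p q (fun y => u y + c) x := by
  rw [SolvesAt, gradient_add_const, pLaplacian_add_const]
  exact ⟨h.1.add contDiffAt_const, fun h0 => (h.2.1 h0).add contDiffAt_const, h.2.2⟩

lemma SolvesAt.pTrace_hessian (h : SolvesAt p q u x) (h0 : ∇ u x ≠ 0) :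
    pTrace p (∇ u x) (hessian u x) = ‖∇ u x‖ ^ (q + 2 - p) := by
  have hpos : 0 < ‖∇ u x‖ := norm_pos_iff.2 h0
  rw [show q + 2 - p = q - (p - 2) by ring, Real.rpow_sub hpos, ← h.2.2,
    pLaplacian_eq ((h.2.1 h0).of_le (by norm_num)) h0, mul_div_cancel_left₀ _ (by positivity)]

lemma SolvesAt.norm_sq_mul_pTrace_hessian (h : SolvesAt p q u x) (h0 : ∇ u x ≠ 0) :
    ‖∇ u x‖ ^ 2 * traceCLM (hessian u x) + (p - 2) * ⟪∇ u x, hessian u x (∇ u x)⟫ =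
      ‖∇ u x‖ ^ (q + 4 - p) := by
  have hpos : 0 < ‖∇ u x‖ := norm_pos_iff.2 h0
  rw [show q + 4 - p = q + 2 - p + 2 by ring, Real.rpow_add hpos, ← h.pTrace_hessian h0,
    Real.rpow_two, pTrace_apply]
  field_simp

-- Differentiate the equation, cleared of denominators, in the direction of the gradient.
lemma SolvesAt.pTrace_fderiv_hessian (h : ∀ᶠ y in 𝓝 x, SolvesAt p q u y) (h0 : ∇ u x ≠ 0) :
    pTrace p (∇ u x) (fderiv ℝ (hessian u) x (∇ u x)) =
      (q + 2 - p) * ‖∇ u x‖ ^ (q + 2 - p) * (⟪∇ u x, hessian u x (∇ u x)⟫ / ‖∇ u x‖ ^ 2) +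
        2 * (p - 2) * ((⟪∇ u x, hessian u x (∇ u x)⟫ / ‖∇ u x‖ ^ 2) ^ 2 -
          ‖hessian u x (∇ u x)‖ ^ 2 / ‖∇ u x‖ ^ 2) := by
  have hx := h.self_of_nhds
  have hu := hx.2.1 h0
  have hgrad := hasFDerivAt_gradient (hu.of_le (by norm_num))
  have hhess := hasFDerivAt_hessian hu
  have hleft := ((hgrad.norm_sq).mul (traceCLM.hasFDerivAt.comp x hhess)).add
    ((hgrad.inner ℝ (hhess.clm_apply hgrad)).const_mul (p - 2))
  have hright := hasFDerivAt_norm_rpow_of_ne_zero hgrad h0 (q + 4 - p)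
  have heq : (fun y => ‖∇ u y‖ ^ (q + 4 - p)) =ᶠ[𝓝 x] fun y => ‖∇ u y‖ ^ 2 *
      traceCLM (hessian u y) + (p - 2) * ⟪∇ u y, hessian u y (∇ u y)⟫ := by
    filter_upwards [h, eventually_gradient_ne hx.1 h0] with y hy hy0
    exact (hy.norm_sq_mul_pTrace_hessian hy0).symm
  have hderiv := DFunLike.congr_fun
    (hleft.unique (hright.congr_of_eventuallyEq heq.symm)) (∇ u x)
  have hself := inner_apply_apply_of_isSymmetric (isSymmetric_hessian (hu.of_le (by norm_num)))
    (∇ u x)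
  have hz : ‖∇ u x‖ ^ 2 ≠ 0 := pow_ne_zero 2 (norm_ne_zero_iff.2 h0)
  rw [show q + 4 - p - 2 = q + 2 - p by ring] at hderiv
  simp only [Function.comp_apply, add_apply, smul_apply, ContinuousLinearMap.comp_apply,
    smul_eq_mul, coe_innerSL_apply, nsmul_eq_mul, Nat.cast_ofNat, ContinuousLinearMap.prod_apply,
    ContinuousLinearMap.flip_apply, fderivInnerCLM_apply, inner_add_right, hself,
    real_inner_self_eq_norm_sq] at hderiv
  rw [← hx.pTrace_hessian h0, pTrace_apply] at hderiv ⊢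
  rw [pTrace_apply]
  field_simp at hderiv ⊢
  linear_combination hderiv

end StrongSolutionsAtAPoint

section BernsteinFunction

variable {E : Type*} [NormedAddCommGroup E] [InnerProductSpace ℝ E] [CompleteSpace E]
  {u : E → ℝ} {x x₀ : E} {r α : ℝ}

lemma hasFDerivAt_inv_smul {c : E → ℝ} {F : E → E} {c' : E} {F' : E →L[ℝ] E}
    (hc : HasGradientAt c c' x) (hF : HasFDerivAt F F' x) (h0 : c x ≠ 0) :
    HasFDerivAt (fun y => (c y)⁻¹ • F y)
      ((c x)⁻¹ • F' - ((c x) ^ 2)⁻¹ • rankOne ℝ (F x) c') x := by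
  refine (((hasDerivAt_inv h0).comp_hasFDerivAt x hc.hasFDerivAt).smul hF).congr_fderiv ?_
  ext1 v
  simp [smul_smul, sub_eq_add_neg]

lemma hasGradientAt_norm_gradient_sq (hu : ContDiffAt ℝ 2 u x) :
    HasGradientAt (fun y => ‖∇ u y‖ ^ 2) ((2 : ℝ) • hessian u x (∇ u x)) x := by
  rw [hasGradientAt_iff_hasFDerivAt]
  refine (hasFDerivAt_gradient hu).norm_sq.congr_fderiv ?_
  ext1 v
  have := isSymmetric_hessian hu (∇ u x) v
  simp_all

lemma hasGradientAt_sq_sub_norm_sq (r : ℝ) (x₀ x : E) :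
    HasGradientAt (fun y => r ^ 2 - ‖y - x₀‖ ^ 2) (-((2 : ℝ) • (x - x₀))) x := by
  rw [hasGradientAt_iff_hasFDerivAt]
  refine (((hasFDerivAt_id x).sub_const x₀).norm_sq.const_sub (r ^ 2)).congr_fderiv ?_
  ext1 v
  simp

/-- The logarithm of the quantity `(r² - |y - x₀|²)^α |∇u(y)| / u(y)` maximized in Bernstein's
method. -/
noncomputable def bernsteinLog (α r : ℝ) (x₀ : E) (u : E → ℝ) (y : E) : ℝ :=
  Real.log (‖∇ u y‖ ^ 2) / 2 - Real.log (u y) + α * Real.log (r ^ 2 - ‖y - x₀‖ ^ 2)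

/-- The gradient field of `bernsteinLog`. -/
noncomputable def bernsteinField (α r : ℝ) (x₀ : E) (u : E → ℝ) (y : E) : E :=
  (‖∇ u y‖ ^ 2)⁻¹ • hessian u y (∇ u y) - (u y)⁻¹ • ∇ u y -
    (2 * α) • (r ^ 2 - ‖y - x₀‖ ^ 2)⁻¹ • (y - x₀)

lemma hasGradientAt_bernsteinLog (hu : ContDiffAt ℝ 2 u x) (hux : u x ≠ 0) (h0 : ∇ u x ≠ 0)
    (hη : r ^ 2 - ‖x - x₀‖ ^ 2 ≠ 0) :
    HasGradientAt (bernsteinLog α r x₀ u) (bernsteinField α r x₀ u x) x := by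
  have hgrad : HasGradientAt (fun y => Real.log (‖∇ u y‖ ^ 2) / 2)
      (((‖∇ u x‖ ^ 2)⁻¹ / 2) • (2 : ℝ) • hessian u x (∇ u x)) x :=
    hasGradientAt_comp_of_hasDerivAt (φ := fun t => Real.log t / 2) (f := fun y => ‖∇ u y‖ ^ 2)
      ((Real.hasDerivAt_log (pow_ne_zero 2 (norm_ne_zero_iff.2 h0))).div_const 2)
      (hasGradientAt_norm_gradient_sq hu)
  have hval := hasGradientAt_comp_of_hasDerivAt (Real.hasDerivAt_log hux)
    (hu.differentiableAt (by norm_num)).hasGradientAt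
  have hcut : HasGradientAt (fun y => α * Real.log (r ^ 2 - ‖y - x₀‖ ^ 2))
      ((α * (r ^ 2 - ‖x - x₀‖ ^ 2)⁻¹) • -((2 : ℝ) • (x - x₀))) x :=
    hasGradientAt_comp_of_hasDerivAt (φ := fun t => α * Real.log t)
      (f := fun y => r ^ 2 - ‖y - x₀‖ ^ 2) ((Real.hasDerivAt_log hη).const_mul α)
      (hasGradientAt_sq_sub_norm_sq r x₀ x)
  have hfield : bernsteinField α r x₀ u x = ((‖∇ u x‖ ^ 2)⁻¹ / 2) • (2 : ℝ) • hessian u x (∇ u x) -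
      (u x)⁻¹ • ∇ u x + (α * (r ^ 2 - ‖x - x₀‖ ^ 2)⁻¹) • -((2 : ℝ) • (x - x₀)) := by
    rw [bernsteinField]
    module
  rw [hfield]
  exact hasGradientAt_add (hasGradientAt_sub hgrad hval) hcut

lemma hasFDerivAt_bernsteinField (hu : ContDiffAt ℝ 3 u x) (hux : u x ≠ 0) (h0 : ∇ u x ≠ 0)
    (hη : r ^ 2 - ‖x - x₀‖ ^ 2 ≠ 0) :
    HasFDerivAt (bernsteinField α r x₀ u)
      ((‖∇ u x‖ ^ 2)⁻¹ • (fderiv ℝ (hessian u) x (∇ u x) + (hessian u x).comp (hessian u x)) -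
        (2 * ((‖∇ u x‖ ^ 2) ^ 2)⁻¹) •
          rankOne ℝ (hessian u x (∇ u x)) (hessian u x (∇ u x)) -
        ((u x)⁻¹ • hessian u x - ((u x) ^ 2)⁻¹ • rankOne ℝ (∇ u x) (∇ u x)) -
        (2 * α) • ((r ^ 2 - ‖x - x₀‖ ^ 2)⁻¹ • ContinuousLinearMap.id ℝ E +
          (2 * ((r ^ 2 - ‖x - x₀‖ ^ 2) ^ 2)⁻¹) • rankOne ℝ (x - x₀) (x - x₀))) x := by
  have hu2 : ContDiffAt ℝ 2 u x := hu.of_le (by norm_num)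
  have hgrad := hasFDerivAt_inv_smul (hasGradientAt_norm_gradient_sq hu2)
    ((hasFDerivAt_hessian hu).clm_apply (hasFDerivAt_gradient hu2))
    (pow_ne_zero 2 (norm_ne_zero_iff.2 h0))
  have hval := hasFDerivAt_inv_smul (hu.differentiableAt (by norm_num)).hasGradientAt
    (hasFDerivAt_gradient hu2) hux
  have hcut := (hasFDerivAt_inv_smul (hasGradientAt_sq_sub_norm_sq r x₀ x)
    ((hasFDerivAt_id x).sub_const x₀) hη).const_smul (2 * α)
  refine ((hgrad.sub hval).sub hcut).congr_fderiv (ContinuousLinearMap.ext fun v => ?_)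
  simp [fderiv_hessian_comm hu v, smul_smul]
  module

end BernsteinFunction

section BernsteinAlgebra

variable {E : Type*} [NormedAddCommGroup E] [InnerProductSpace ℝ E] [FiniteDimensional ℝ E]
  {G e : E} {H C D : E →L[ℝ] E} {p m a y : ℝ}

-- With `C` the derivative of the Hessian `H` along the gradient `G`, `a = 1 / u` and `y` the value
-- of the operator on `H`, this is the second-order condition at a maximum point of `bernsteinLog`.
lemma bernstein_inequality (hG : G ≠ 0) (hH : H.toLinearMap.IsSymmetric)
    (hHG : H G = ‖G‖ ^ 2 • (a • G + e)) (hy : pTrace p G H = y)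
    (hC : pTrace p G C = m * y * (⟪G, H G⟫ / ‖G‖ ^ 2) +
      2 * (p - 2) * ((⟪G, H G⟫ / ‖G‖ ^ 2) ^ 2 - ‖H G‖ ^ 2 / ‖G‖ ^ 2))
    (hmax : pTrace p G ((‖G‖ ^ 2)⁻¹ • (C + H.comp H) -
      (2 * ((‖G‖ ^ 2) ^ 2)⁻¹) • rankOne ℝ (H G) (H G) - (a • H - a ^ 2 • rankOne ℝ G G) - D) ≤ 0) :
    (y - (p - 1) * (a * ‖G‖ ^ 2 + ⟪G, e⟫)) ^ 2 / (finrank ℝ E - 1) +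
        (m - 1) * y * (a * ‖G‖ ^ 2) ≤
      ‖G‖ ^ 2 * pTrace p G D + (p - 2) * (‖G‖ ^ 2 * ‖e‖ ^ 2 - ⟪G, e⟫ ^ 2) +
        (p - 1) * (2 * (a * ‖G‖ ^ 2) * ⟪G, e⟫ + ⟪G, e⟫ ^ 2) - m * y * ⟪G, e⟫ := by
  have hz : 0 < ‖G‖ ^ 2 := by positivity
  have htrace := le_traceCLM_comp_self hH hG
  have hself := inner_apply_apply_of_isSymmetric hH G
  have hdiag : ⟪G, H G⟫ = ‖G‖ ^ 2 * (a * ‖G‖ ^ 2 + ⟪G, e⟫) := by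
    rw [hHG, real_inner_smul_right, inner_add_right, real_inner_smul_right,
      real_inner_self_eq_norm_sq]
  have hnorm : ‖H G‖ ^ 2 =
      ‖G‖ ^ 2 * ((a * ‖G‖ ^ 2) ^ 2 + 2 * (a * ‖G‖ ^ 2) * ⟪G, e⟫ + ‖G‖ ^ 2 * ‖e‖ ^ 2) := by
    rw [hHG, norm_smul, mul_pow, Real.norm_of_nonneg hz.le, norm_add_sq_real, norm_smul, mul_pow,
      real_inner_smul_left, Real.norm_eq_abs, sq_abs]
    ring
  simp only [map_sub, map_add, map_smul, smul_eq_mul, pTrace_rankOne, hC,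
    pTrace_apply p G (H.comp H), ContinuousLinearMap.comp_apply, hself, hy,
    real_inner_self_eq_norm_sq] at hmax
  rw [hdiag, hnorm] at hmax htrace
  rw [pTrace_apply, hdiag] at hy
  have hscaled := mul_nonpos_of_nonneg_of_nonpos hz.le hmax
  rw [show traceCLM H - ‖G‖ ^ 2 * (a * ‖G‖ ^ 2 + ⟪G, e⟫) / ‖G‖ ^ 2 =
    y - (p - 1) * (a * ‖G‖ ^ 2 + ⟪G, e⟫) by rw [← hy]; field_simp; ring] at htrace
  field_simp at hscaled htrace ⊢
  linear_combination hscaled + htrace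

lemma mul_add_sq_le_two_mul {θ P τ Y R : ℝ} (hθ : 0 < θ) (hP : 0 < P) (hτ : 0 < τ) (hY : 0 ≤ Y)
    (hR : 0 ≤ R) (s : ℝ) :
    min θ (τ / (2 * P)) * min 1 (P ^ 2) * (Y + R) ^ 2 ≤
      2 * (θ * (Y - P * (R + s)) ^ 2 + τ * (Y * R) + θ * (P * s) ^ 2) := by
  have hscale : min 1 (P ^ 2) * (Y + R) ^ 2 ≤ (Y + P * R) ^ 2 := by
    rcases le_total 1 P with h | h
    · calc min 1 (P ^ 2) * (Y + R) ^ 2 ≤ 1 * (Y + R) ^ 2 := by gcongr; exact min_le_left _ _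
        _ ≤ (Y + P * R) ^ 2 := by rw [one_mul]; gcongr; exact le_mul_of_one_le_left hR h
    · calc min 1 (P ^ 2) * (Y + R) ^ 2 ≤ P ^ 2 * (Y + R) ^ 2 := by gcongr; exact min_le_right _ _
        _ = (P * Y + P * R) ^ 2 := by ring
        _ ≤ (Y + P * R) ^ 2 := by gcongr; exact mul_le_of_le_one_left hY h
  calc min θ (τ / (2 * P)) * min 1 (P ^ 2) * (Y + R) ^ 2
      ≤ min θ (τ / (2 * P)) * ((Y - P * R) ^ 2 + 4 * P * (Y * R)) := by
        rw [mul_assoc]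
        gcongr
        linarith
    _ ≤ θ * (Y - P * R) ^ 2 + τ / (2 * P) * (4 * P * (Y * R)) := by
        rw [mul_add]
        gcongr
        exacts [min_le_left _ _, min_le_right _ _]
    _ = θ * (Y - P * R) ^ 2 + 2 * (τ * (Y * R)) := by field_simp; ring
    _ ≤ 2 * (θ * (Y - P * (R + s)) ^ 2 + τ * (Y * R) + θ * (P * s) ^ 2) := by
        nlinarith [mul_nonneg hθ.le (sq_nonneg (Y - P * (R + s) - P * s))]

lemma le_mul_of_mul_sq_le {A c T ε : ℝ} (hc : 0 < c) (hA : 0 ≤ A) (hε : 0 ≤ ε)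
    (h : c * T ^ 2 ≤ A * (ε ^ 2 + ε * T)) : T ≤ (1 + 2 * (A / c)) * ε := by
  have hratio : 0 ≤ A / c := by positivity
  have hsq : T ^ 2 ≤ A / c * (ε ^ 2 + ε * T) := by
    rw [div_mul_eq_mul_div, le_div_iff₀ hc]
    linarith
  by_contra! hlt
  have hεT : ε < T := by nlinarith [mul_nonneg hratio hε]
  nlinarith [mul_nonneg (mul_nonneg hratio hε) (sub_nonneg.2 hεT.le)]

lemma bernstein_remainder_le {p q R Y σ e ε : ℝ} (hp : 1 < p) (hq : p - 1 < q) (hR : 0 ≤ R)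
    (hY : 0 ≤ Y) (hσ : |σ| ≤ e) (he : e ≤ ε) :
    (p - 2) * (e ^ 2 - σ ^ 2) + (p - 1) * (2 * R * σ + σ ^ 2) - (q + 2 - p) * Y * σ ≤
      (2 * p + q + 2) * (ε ^ 2 + ε * (Y + R)) := by
  have hε : 0 ≤ ε := (abs_nonneg σ).trans (hσ.trans he)
  obtain ⟨hσl, hσu⟩ := abs_le.1 (hσ.trans he)
  have hσe : σ ^ 2 ≤ e ^ 2 := sq_le_sq' (abs_le.1 hσ).1 (abs_le.1 hσ).2
  have heε : e ^ 2 ≤ ε ^ 2 := pow_le_pow_left₀ ((abs_nonneg σ).trans hσ) he 2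
  have h1 : (p - 2) * (e ^ 2 - σ ^ 2) ≤ p * ε ^ 2 :=
    mul_le_mul (by linarith) (by linarith [sq_nonneg σ]) (by linarith) (by linarith)
  have h2 : (p - 1) * (2 * R * σ + σ ^ 2) ≤ p * (2 * R * ε + ε ^ 2) :=
    calc (p - 1) * (2 * R * σ + σ ^ 2) ≤ (p - 1) * (2 * R * ε + ε ^ 2) := by
          refine mul_le_mul_of_nonneg_left (add_le_add ?_ (by linarith)) (by linarith)
          exact mul_le_mul_of_nonneg_left hσu (by linarith)
      _ ≤ p * (2 * R * ε + ε ^ 2) := mul_le_mul_of_nonneg_right (by linarith) (by positivity)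
  have h3 : (q + 2 - p) * Y * -σ ≤ (q + 2) * Y * ε :=
    calc (q + 2 - p) * Y * -σ ≤ (q + 2 - p) * Y * ε :=
          mul_le_mul_of_nonneg_left (by linarith) (mul_nonneg (by linarith) hY)
      _ ≤ (q + 2) * Y * ε := by gcongr; linarith
  have hrest : 0 ≤ (q + 2) * (ε * R + ε ^ 2) + 2 * p * (ε * Y) :=
    add_nonneg (mul_nonneg (by linarith) (by positivity))
      (mul_nonneg (by linarith) (by positivity))
  linear_combination h1 + h2 + h3 + hrest

lemma exists_le_of_bernstein_inequality {n p q : ℝ} (hn : 1 < n) (hp : 1 < p) (hq : p - 1 < q)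
    {c : ℝ} (hc : 0 ≤ c) :
    ∃ K > 0, ∀ g a Y s e d ε : ℝ, 0 < g → 0 ≤ a → 0 ≤ Y → |s| ≤ g * e → e ≤ ε → d ≤ c * ε ^ 2 →
      (g * Y - (p - 1) * (a * g ^ 2 + s)) ^ 2 / (n - 1) +
          (q + 2 - p - 1) * (g * Y) * (a * g ^ 2) ≤
        g ^ 2 * d + (p - 2) * (g ^ 2 * e ^ 2 - s ^ 2) +
          (p - 1) * (2 * (a * g ^ 2) * s + s ^ 2) - (q + 2 - p) * (g * Y) * s →
      Y + g * a ≤ K * ε := by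
  have hθ : 0 < 1 / (n - 1) := by rw [one_div_pos]; linarith
  set θ := 1 / (n - 1)
  set A := 2 * (c + 2 * p + q + 2 + θ * (p - 1) ^ 2)
  have hq0 : 0 < q := by linarith
  have hA : 0 ≤ A := by positivity
  set κ := min θ ((q + 1 - p) / (2 * (p - 1))) * min 1 ((p - 1) ^ 2)
  have hκ : 0 < κ := mul_pos (lt_min hθ (div_pos (by linarith) (by linarith)))
    (lt_min one_pos (pow_pos (by linarith) 2))
  refine ⟨1 + 2 * (A / κ), by positivity, fun g a Y s e d ε hg ha hY hs he hd h => ?_⟩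
  obtain ⟨σ, rfl⟩ : ∃ σ, s = g * σ := ⟨s / g, by field_simp⟩
  have hσ : |σ| ≤ e := by
    rwa [abs_mul, abs_of_pos hg, mul_le_mul_iff_right₀ hg] at hs
  have he0 : 0 ≤ e := (abs_nonneg σ).trans hσ
  have hR : 0 ≤ g * a := by positivity
  set R := g * a
  have hdiv : θ * (Y - (p - 1) * (R + σ)) ^ 2 + (q + 1 - p) * (Y * R) ≤
      d + (p - 2) * (e ^ 2 - σ ^ 2) + (p - 1) * (2 * R * σ + σ ^ 2) - (q + 2 - p) * Y * σ := by
    refine le_of_mul_le_mul_left ?_ (pow_pos hg 2)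
    linear_combination h
  refine le_mul_of_mul_sq_le hκ hA (he0.trans he)
    ((mul_add_sq_le_two_mul hθ (by linarith) (by linarith) hY hR σ).trans ?_)
  have hremainder := bernstein_remainder_le hp hq hR hY hσ he
  have hsq : θ * ((p - 1) * σ) ^ 2 ≤ θ * (p - 1) ^ 2 * ε ^ 2 := by
    rw [mul_pow, ← mul_assoc]
    exact mul_le_mul_of_nonneg_left (sq_le_sq' (abs_le.1 (hσ.trans he)).1
      (abs_le.1 (hσ.trans he)).2) (by positivity)
  have hrest : 0 ≤ (c + θ * (p - 1) ^ 2) * (ε * (Y + R)) :=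
    mul_nonneg (by positivity) (mul_nonneg (he0.trans he) (add_nonneg hY hR))
  linear_combination 2 * hdiv + 2 * hd + 2 * hremainder + 2 * hsq + 2 * hrest

end BernsteinAlgebra

section GradientBounds

variable {E : Type*} [NormedAddCommGroup E] [InnerProductSpace ℝ E] [FiniteDimensional ℝ E]
  {p q α : ℝ}

lemma pTrace_id_add_rankOne_le {v X : E} {r η : ℝ} (hp : 1 ≤ p) (hv : v ≠ 0) (hη : 0 < η)
    (hηr : η ≤ r ^ 2) (hX : ‖X‖ ^ 2 ≤ r ^ 2) :
    pTrace p v (η⁻¹ • ContinuousLinearMap.id ℝ E + (2 * (η ^ 2)⁻¹) • rankOne ℝ X X) ≤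
      (finrank ℝ E + 3 * p) * (r / η) ^ 2 := by
  have hinv : η⁻¹ ≤ (r / η) ^ 2 := by
    rw [div_pow, inv_eq_one_div, div_le_div_iff₀ hη (by positivity)]
    nlinarith
  have hdiv : (2 * (η ^ 2)⁻¹) * (p * r ^ 2) = 2 * p * (r / η) ^ 2 := by field_simp
  rw [map_add, map_smul, map_smul, pTrace_id p hv, smul_eq_mul, smul_eq_mul]
  calc η⁻¹ * (finrank ℝ E + p - 2) + 2 * (η ^ 2)⁻¹ * pTrace p v (rankOne ℝ X X)
      ≤ η⁻¹ * (finrank ℝ E + p) + (2 * (η ^ 2)⁻¹) * (p * r ^ 2) := by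
        gcongr
        · linarith
        · exact (pTrace_rankOne_le hp v X).trans (by gcongr)
    _ ≤ (r / η) ^ 2 * (finrank ℝ E + p) + 2 * p * (r / η) ^ 2 := by
        rw [hdiv]
        gcongr
    _ = (finrank ℝ E + 3 * p) * (r / η) ^ 2 := by ring

lemma eventually_hasGradientAt_bernsteinLog {u : E → ℝ} {x₀ x : E} {r : ℝ}
    (hu : ContDiffAt ℝ 2 u x) (hux : u x ≠ 0) (h0 : ∇ u x ≠ 0) (hη : r ^ 2 - ‖x - x₀‖ ^ 2 ≠ 0) :
    ∀ᶠ y in 𝓝 x, HasGradientAt (bernsteinLog α r x₀ u) (bernsteinField α r x₀ u y) y := by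
  have hcont : ContinuousAt (fun y => r ^ 2 - ‖y - x₀‖ ^ 2) x := by fun_prop
  filter_upwards [hu.eventually (by simp), hu.continuousAt.eventually_ne hux,
    eventually_gradient_ne (hu.of_le (by norm_num)) h0, hcont.eventually_ne hη] with y h1 h2 h3 h4
  exact hasGradientAt_bernsteinLog h1 h2 h3 h4

lemma exists_bernstein_bound (hn : 1 < finrank ℝ E) (hp : 1 < p) (hq : p - 1 < q) (hα : 0 < α) :
    ∃ K > 0, ∀ (u : E → ℝ) (x₀ x : E) (r : ℝ), (∀ᶠ y in 𝓝 x, SolvesAt p q u y) → 0 < u x →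
      ∇ u x ≠ 0 → 0 < r → 0 < r ^ 2 - ‖x - x₀‖ ^ 2 → IsLocalMax (bernsteinLog α r x₀ u) x →
      ‖∇ u x‖ ^ (q + 1 - p) + ‖∇ u x‖ / u x ≤ K * (r / (r ^ 2 - ‖x - x₀‖ ^ 2)) := by
  obtain ⟨K, hK, hbound⟩ := exists_le_of_bernstein_inequality (n := finrank ℝ E)
    (by exact_mod_cast hn) hp hq (c := (finrank ℝ E + 3 * p) / (2 * α)) (by positivity)
  refine ⟨K * (2 * α), by positivity, fun u x₀ x r hsol hux h0 hr hη hmax => ?_⟩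
  have hu3 := hsol.self_of_nhds.2.1 h0
  have hu2 : ContDiffAt ℝ 2 u x := hu3.of_le (by norm_num)
  have hpos : 0 < ‖∇ u x‖ := norm_pos_iff.2 h0
  set η := r ^ 2 - ‖x - x₀‖ ^ 2
  set e : E := (2 * α) • η⁻¹ • (x - x₀) with he
  have hpow : ‖∇ u x‖ ^ (q + 2 - p) = ‖∇ u x‖ * ‖∇ u x‖ ^ (q + 1 - p) := by
    rw [show q + 2 - p = q + 1 - p + 1 by ring, Real.rpow_add_one hpos.ne', mul_comm]
  have hX : ‖x - x₀‖ ^ 2 ≤ r ^ 2 := by linarith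
  have hnorm : ‖e‖ ≤ 2 * α * (r / η) := by
    rw [he, norm_smul, norm_smul, norm_inv, Real.norm_of_nonneg hη.le,
      Real.norm_of_nonneg (by positivity), inv_mul_eq_div]
    gcongr
    exact le_of_sq_le_sq hX hr.le
  have hlog := eventually_hasGradientAt_bernsteinLog (α := α) hu2 hux.ne' h0 hη.ne'
  have hcrit : hessian u x (∇ u x) = ‖∇ u x‖ ^ 2 • ((u x)⁻¹ • ∇ u x + e) := by
    have hzero : bernsteinField α r x₀ u x = 0 := by
      rw [← hlog.self_of_nhds.gradient, gradient, hmax.fderiv_eq_zero, map_zero]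
    rw [bernsteinField, sub_sub, sub_eq_zero] at hzero
    rw [← hzero, smul_inv_smul₀ (by positivity)]
  have hbern := bernstein_inequality h0 (isSymmetric_hessian hu2) hcrit
    ((hsol.self_of_nhds.pTrace_hessian h0).trans hpow)
    (hpow ▸ SolvesAt.pTrace_fderiv_hessian hsol h0)
    (by simpa only [inv_pow] using pTrace_nonpos hp.le h0 (inner_nonpos_of_isLocalMax hlog
      (hasFDerivAt_bernsteinField hu3 hux.ne' h0 hη.ne') hmax))
  have hcut := pTrace_id_add_rankOne_le hp.le h0 hη (by linarith [sq_nonneg ‖x - x₀‖]) hX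
  have hsum := hbound ‖∇ u x‖ (u x)⁻¹ _ _ ‖e‖ _ (2 * α * (r / η)) hpos (by positivity)
    (by positivity) (abs_real_inner_le_norm _ _) hnorm (by
      rw [map_smul, smul_eq_mul]
      refine (mul_le_mul_of_nonneg_left hcut (by positivity)).trans_eq ?_
      field_simp) hbern
  rwa [← div_eq_mul_inv, ← mul_assoc] at hsum

lemma bernsteinLog_eq_log {u : E → ℝ} {x₀ y : E} {r : ℝ} (hη : 0 < r ^ 2 - ‖y - x₀‖ ^ 2)
    (huy : 0 < u y) (h0 : ∇ u y ≠ 0) :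
    bernsteinLog α r x₀ u y =
      Real.log ((r ^ 2 - ‖y - x₀‖ ^ 2) ^ α * (‖∇ u y‖ / u y)) := by
  have hpos : 0 < ‖∇ u y‖ := norm_pos_iff.2 h0
  rw [bernsteinLog, Real.log_mul (by positivity) (by positivity), Real.log_div hpos.ne' huy.ne',
    Real.log_rpow hη, Real.log_pow]
  push_cast
  ring

lemma isLocalMax_bernsteinLog {u : E → ℝ} {x₀ x : E} {r : ℝ} (hr : 0 < r)
    (hu : ContDiffAt ℝ 1 u x) (hux : 0 < u x) (h0 : ∇ u x ≠ 0) (hη : 0 < r ^ 2 - ‖x - x₀‖ ^ 2)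
    (hmax : IsMaxOn (fun y => (r ^ 2 - ‖y - x₀‖ ^ 2) ^ α * (‖∇ u y‖ / u y)) (closedBall x₀ r) x) :
    IsLocalMax (bernsteinLog α r x₀ u) x := by
  have hcont : ContinuousAt (fun y => r ^ 2 - ‖y - x₀‖ ^ 2) x := by fun_prop
  filter_upwards [hcont.eventually_const_lt hη, hu.continuousAt.eventually_const_lt hux,
    eventually_gradient_ne hu h0] with y hηy huy hy0
  have : 0 < ‖∇ u y‖ := norm_pos_iff.2 hy0
  rw [bernsteinLog_eq_log hηy huy hy0, bernsteinLog_eq_log hη hux h0]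
  refine Real.log_le_log (by positivity) (hmax ?_)
  rw [mem_closedBall_iff_norm]
  exact le_of_sq_le_sq (by linarith) hr.le

lemma exists_isMaxOn_bernstein {u : E → ℝ} {x₀ : E} {r : ℝ} (hα : 0 < α) (hr : 0 < r)
    (hu : ∀ y ∈ closedBall x₀ r, ContDiffAt ℝ 1 u y) (hpos : ∀ y ∈ closedBall x₀ r, 0 < u y)
    (h0 : ∇ u x₀ ≠ 0) :
    ∃ x ∈ closedBall x₀ r, ∇ u x ≠ 0 ∧ 0 < r ^ 2 - ‖x - x₀‖ ^ 2 ∧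
      IsMaxOn (fun y => (r ^ 2 - ‖y - x₀‖ ^ 2) ^ α * (‖∇ u y‖ / u y)) (closedBall x₀ r) x := by
  have hcenter : x₀ ∈ closedBall x₀ r := mem_closedBall_self hr.le
  have hcont : ContinuousOn (fun y => (r ^ 2 - ‖y - x₀‖ ^ 2) ^ α * (‖∇ u y‖ / u y))
      (closedBall x₀ r) := by
    refine fun y hy => ContinuousAt.continuousWithinAt ?_
    have hgrad := (contDiffAt_gradient (m := 0) (hu y hy) (by norm_num)).continuousAt
    exact (ContinuousAt.rpow_const (by fun_prop) (Or.inr hα.le)).mul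
      (hgrad.norm.div (hu y hy).continuousAt (hpos y hy).ne')
  obtain ⟨x, hx, hmax⟩ := (isCompact_closedBall x₀ r).exists_isMaxOn ⟨x₀, hcenter⟩ hcont
  have hvalue : 0 < (r ^ 2 - ‖x - x₀‖ ^ 2) ^ α * (‖∇ u x‖ / u x) := by
    have : 0 < ‖∇ u x₀‖ := norm_pos_iff.2 h0
    have hux₀ := hpos x₀ hcenter
    have hle : (r ^ 2) ^ α * (‖∇ u x₀‖ / u x₀) ≤
        (r ^ 2 - ‖x - x₀‖ ^ 2) ^ α * (‖∇ u x‖ / u x) := by simpa using hmax hcenter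
    exact lt_of_lt_of_le (by positivity) hle
  refine ⟨x, hx, fun h => ?_, lt_of_le_of_ne ?_ fun h => ?_, hmax⟩
  · simp [h] at hvalue
  · rw [sub_nonneg]
    gcongr
    exact mem_closedBall_iff_norm.1 hx
  · rw [← h, Real.zero_rpow hα.ne', zero_mul] at hvalue
    exact hvalue.false

lemma exists_bernstein_max (hn : 1 < finrank ℝ E) (hp : 1 < p) (hq : p - 1 < q) (hα : 0 < α) :
    ∃ K > 0, ∀ (u : E → ℝ) (x₀ : E) (r : ℝ), 0 < r →
      (∀ y ∈ closedBall x₀ r, ∀ᶠ z in 𝓝 y, SolvesAt p q u z) → (∀ y ∈ closedBall x₀ r, 0 < u y) →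
      ∇ u x₀ ≠ 0 → ∃ y ∈ closedBall x₀ r, ∃ η, 0 < η ∧ η ≤ r ^ 2 ∧
        (r ^ 2) ^ α * (‖∇ u x₀‖ / u x₀) ≤ η ^ α * (‖∇ u y‖ / u y) ∧
        ‖∇ u y‖ ^ (q + 1 - p) + ‖∇ u y‖ / u y ≤ K * (r / η) := by
  obtain ⟨K, hK, hbound⟩ := exists_bernstein_bound hn hp hq hα
  refine ⟨K, hK, fun u x₀ r hr hsol hpos h0 => ?_⟩
  obtain ⟨x, hx, hx0, hη, hmax⟩ := exists_isMaxOn_bernstein hα hr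
    (fun y hy => (hsol y hy).self_of_nhds.1) hpos h0
  refine ⟨x, hx, r ^ 2 - ‖x - x₀‖ ^ 2, hη, by simp, ?_, hbound u x₀ x r (hsol x hx) (hpos x hx) hx0
    hr hη (isLocalMax_bernsteinLog hr (hsol x hx).self_of_nhds.1 (hpos x hx) hx0 hη hmax)⟩
  simpa using hmax (mem_closedBall_self hr.le)

lemma exists_norm_gradient_le_div (hn : 1 < finrank ℝ E) (hp : 1 < p) (hq : p - 1 < q) :
    ∃ K > 0, ∀ (u : E → ℝ) (x₀ : E) (r : ℝ), 0 < r →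
      (∀ y ∈ closedBall x₀ r, ∀ᶠ z in 𝓝 y, SolvesAt p q u z) → (∀ y ∈ closedBall x₀ r, 0 < u y) →
      ‖∇ u x₀‖ ≤ K * (u x₀ / r) := by
  obtain ⟨K, hK, hmax⟩ := exists_bernstein_max (E := E) hn hp hq one_pos
  refine ⟨K, hK, fun u x₀ r hr hsol hpos => ?_⟩
  have hux₀ := hpos x₀ (mem_closedBall_self hr.le)
  rcases eq_or_ne (∇ u x₀) 0 with h0 | h0
  · rw [h0, norm_zero]
    positivity
  obtain ⟨y, -, η, hη, -, hle, hbound⟩ := hmax u x₀ r hr hsol hpos h0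
  have hquot : ‖∇ u y‖ / u y ≤ K * (r / η) :=
    (le_add_of_nonneg_left (by positivity)).trans hbound
  simp only [Real.rpow_one] at hle
  have hscaled : r ^ 2 * (‖∇ u x₀‖ / u x₀) ≤ K * r :=
    calc r ^ 2 * (‖∇ u x₀‖ / u x₀) ≤ η * (K * (r / η)) := hle.trans (by gcongr)
      _ = K * r := by field_simp
  field_simp at hscaled ⊢
  linarith

-- Apply Bernstein's estimate to `u + u x₀`: since `|∇u| / (u + u x₀) ≤ |∇u| / u x₀` on the ball,
-- with equality up to a factor `2` at its centre, the value `u x₀` cancels.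
lemma exists_norm_gradient_le_rpow (hn : 1 < finrank ℝ E) (hp : 1 < p) (hq : p - 1 < q) :
    ∃ K > 0, ∀ (u : E → ℝ) (x₀ : E) (r : ℝ), 0 < r →
      (∀ y ∈ closedBall x₀ r, ∀ᶠ z in 𝓝 y, SolvesAt p q u z) → (∀ y ∈ closedBall x₀ r, 0 < u y) →
      ‖∇ u x₀‖ ≤ K * r ^ (-(1 / (q + 1 - p))) := by
  have hτ : 0 < q + 1 - p := by linarith
  set α := 1 / (q + 1 - p) with hα
  obtain ⟨K, hK, hmax⟩ := exists_bernstein_max (E := E) hn hp hq (α := α) (by positivity)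
  refine ⟨2 * K ^ α, by positivity, fun u x₀ r hr hsol hpos => ?_⟩
  have hux₀ := hpos x₀ (mem_closedBall_self hr.le)
  rcases eq_or_ne (∇ u x₀) 0 with h0 | h0
  · rw [h0, norm_zero]
    positivity
  obtain ⟨y, hy, η, hη, -, hle, hbound⟩ := hmax (fun y => u y + u x₀) x₀ r hr
    (fun y hy => (hsol y hy).mono fun z hz => hz.add_const _)
    (fun y hy => add_pos (hpos y hy) hux₀) (by rwa [gradient_add_const])
  simp only [gradient_add_const] at hle hbound
  have huy := hpos y hy
  have hgrad : ‖∇ u y‖ ≤ (K * (r / η)) ^ α := by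
    rw [hα, one_div, Real.le_rpow_inv_iff_of_pos (norm_nonneg _) (by positivity) hτ]
    exact (le_add_of_nonneg_right (by positivity)).trans hbound
  have hscaled : (r ^ 2) ^ α * (‖∇ u x₀‖ / (u x₀ + u x₀)) ≤ (K * r) ^ α / u x₀ :=
    calc (r ^ 2) ^ α * (‖∇ u x₀‖ / (u x₀ + u x₀))
        ≤ η ^ α * ((K * (r / η)) ^ α / u x₀) := hle.trans (by gcongr; linarith)
      _ = (K * r) ^ α / u x₀ := by
        rw [← mul_div_assoc, ← Real.mul_rpow hη.le (by positivity)]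
        congr 2
        field_simp
  rw [sq, Real.mul_rpow hr.le hr.le, Real.mul_rpow hK.le hr.le] at hscaled
  rw [Real.rpow_neg hr.le]
  field_simp at hscaled ⊢
  linarith

end GradientBounds

section RadialPowers

variable {E : Type*} [NormedAddCommGroup E] [InnerProductSpace ℝ E] {p : ℝ} {x z : E}

/-- The translated radial power `c |y - z|^s + a`, used as a barrier. -/
noncomputable def radialPower (c s a : ℝ) (z y : E) : ℝ := c * ‖y - z‖ ^ s + a

lemma contDiffAt_radialPower (hx : x ≠ z) (c s a : ℝ) {n : WithTop ℕ∞} :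
    ContDiffAt ℝ n (radialPower c s a z) x := by
  have hnorm : ContDiffAt ℝ n (fun y : E => ‖y - z‖) x :=
    (contDiffAt_id.sub contDiffAt_const).norm ℝ (sub_ne_zero.2 hx)
  exact (contDiffAt_const.mul
    (hnorm.rpow_const_of_ne (norm_ne_zero_iff.2 (sub_ne_zero.2 hx)))).add contDiffAt_const

variable [FiniteDimensional ℝ E]

lemma gradient_radialPower (hx : x ≠ z) (c s a : ℝ) :
    ∇ (radialPower c s a z) x = (c * s * ‖x - z‖ ^ (s - 2)) • (x - z) := by
  refine HasGradientAt.gradient (hasGradientAt_iff_hasFDerivAt.2 ?_)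
  refine (((hasFDerivAt_norm_rpow_of_ne_zero ((hasFDerivAt_id x).sub_const z)
    (sub_ne_zero.2 hx) s).const_mul c).add_const a).congr_fderiv ?_
  ext v
  simp [mul_assoc]

lemma norm_gradient_radialPower (hx : x ≠ z) (c s a : ℝ) :
    ‖∇ (radialPower c s a z) x‖ = |c * s| * ‖x - z‖ ^ (s - 1) := by
  have hpos : 0 < ‖x - z‖ := norm_pos_iff.2 (sub_ne_zero.2 hx)
  rw [gradient_radialPower hx, norm_smul, Real.norm_eq_abs, abs_mul,
    abs_of_pos (Real.rpow_pos_of_pos hpos _), mul_assoc, ← Real.rpow_add_one hpos.ne']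
  ring_nf

lemma gradient_radialPower_ne_zero (hx : x ≠ z) {c s : ℝ} (hcs : c * s ≠ 0) (a : ℝ) :
    ∇ (radialPower c s a z) x ≠ 0 := by
  have : 0 < ‖x - z‖ := norm_pos_iff.2 (sub_ne_zero.2 hx)
  rw [← norm_pos_iff, norm_gradient_radialPower hx]
  positivity

lemma pFlux_radialPower (hx : x ≠ z) (c s a : ℝ) :
    pFlux p (radialPower c s a z) x = (|c * s| ^ (p - 2) * (c * s)) •
      (‖x - z‖ ^ ((s - 1) * (p - 1) - 1) • (x - z)) := by
  have hpos : 0 < ‖x - z‖ := norm_pos_iff.2 (sub_ne_zero.2 hx)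
  rw [pFlux, norm_gradient_radialPower hx, gradient_radialPower hx, smul_smul, smul_smul,
    Real.mul_rpow (abs_nonneg _) (by positivity), ← Real.rpow_mul hpos.le,
    show (s - 1) * (p - 1) - 1 = (s - 1) * (p - 2) + (s - 2) by ring, Real.rpow_add hpos]
  ring_nf

lemma pLaplacian_radialPower (hx : x ≠ z) (c s a : ℝ) :
    pLaplacian p (radialPower c s a z) x = |c * s| ^ (p - 2) * (c * s) *
      ((finrank ℝ E - 1 + (s - 1) * (p - 1)) * ‖x - z‖ ^ ((s - 1) * (p - 1) - 1)) := by
  have hpos : 0 < ‖x - z‖ := norm_pos_iff.2 (sub_ne_zero.2 hx)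
  set μ := (s - 1) * (p - 1) - 1
  have hflux : pFlux p (radialPower c s a z) =ᶠ[𝓝 x]
      fun y => (|c * s| ^ (p - 2) * (c * s)) • (‖y - z‖ ^ μ • (y - z)) := by
    filter_upwards [isOpen_ne.mem_nhds hx] with y hy using pFlux_radialPower hy c s a
  have hderiv : HasFDerivAt
      (fun y => (|c * s| ^ (p - 2) * (c * s)) • (‖y - z‖ ^ μ • (y - z))) _ x :=
    (hasFDerivAt_norm_rpow_smul ((hasFDerivAt_id x).sub_const z) (sub_ne_zero.2 hx) μ).const_smul _
  rw [pLaplacian, hflux.fderiv_eq, hderiv.fderiv, map_smul, map_smul, map_add, map_smul,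
    traceCLM_id, traceCLM_apply (ContinuousLinearMap.smulRight _ _),
    ContinuousLinearMap.coe_smulRight, LinearMap.trace_smulRight]
  simp only [ContinuousLinearMap.comp_id, ContinuousLinearMap.coe_coe, innerSL_apply_apply, id_eq,
    real_inner_self_eq_norm_sq, smul_eq_mul]
  field_simp
  ring

end RadialPowers

section StrongMaximumPrinciple

variable {E : Type*} [NormedAddCommGroup E] [InnerProductSpace ℝ E] [FiniteDimensional ℝ E]
  {p q ρ M : ℝ} {v : E → ℝ} {x z : E}

/-- `C¹`, and `C²` where the gradient does not vanish: the regularity under which the maximum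
principles below hold. -/
def RegularAt (u : E → ℝ) (x : E) : Prop :=
  ContDiffAt ℝ 1 u x ∧ (∇ u x ≠ 0 → ContDiffAt ℝ 2 u x)

lemma SolvesAt.regularAt (h : SolvesAt p q v x) : RegularAt v x :=
  ⟨h.1, fun h0 => (h.2.1 h0).of_le (by norm_num)⟩

lemma RegularAt.differentiableAt (h : RegularAt v x) : DifferentiableAt ℝ v x :=
  h.1.differentiableAt (by norm_num)

lemma RegularAt.neg (h : RegularAt v x) : RegularAt (fun y => -v y) x :=
  ⟨h.1.neg, fun h0 => (h.2 (by rwa [gradient_neg, neg_ne_zero] at h0)).neg⟩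

lemma RegularAt.comp_add_right {a : E} (h : RegularAt v (x + a)) :
    RegularAt (fun y => v (y + a)) x := by
  refine ⟨ContDiffAt.comp x h.1 (contDiffAt_id.add contDiffAt_const), fun h0 => ?_⟩
  rw [gradient_comp_add_right] at h0
  exact ContDiffAt.comp x (h.2 h0) (contDiffAt_id.add contDiffAt_const)

lemma le_of_strict_barrier (hp : 1 ≤ p) {K : Set E} (hK : IsCompact K) {ψ : E → ℝ}
    (hv : ContinuousOn v K) (hψ : ContinuousOn ψ K)
    (h : ∀ x ∈ K, v x ≤ ψ x ∨ (K ∈ 𝓝 x ∧ ContDiffAt ℝ 2 ψ x ∧ ∇ ψ x ≠ 0 ∧ RegularAt v x ∧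
      (∇ v x = ∇ ψ x → pLaplacian p ψ x < pLaplacian p v x))) :
    ∀ x ∈ K, v x ≤ ψ x := by
  intro x hx
  obtain ⟨x₁, hx₁, hmax⟩ := hK.exists_isMaxOn ⟨x, hx⟩ (hv.sub hψ)
  rcases h x₁ hx₁ with hle | ⟨hnhds, hψ₂, hψ₀, hreg, hlt⟩
  · have : v x - ψ x ≤ v x₁ - ψ x₁ := hmax hx
    linarith
  · have hloc : IsLocalMax (fun y => v y - ψ y) x₁ := by
      filter_upwards [hnhds] with y hy using hmax hy
    have hgrad := gradient_eq_of_isLocalMax_sub hreg.differentiableAt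
      (hψ₂.differentiableAt (by norm_num)) hloc
    exact absurd (pLaplacian_le_of_isLocalMax_sub hp (hreg.2 (hgrad ▸ hψ₀)) hψ₂ hloc hψ₀)
      (hlt hgrad).not_ge

lemma le_radialPower_on_annulus (hp : 1 ≤ p) {c s a r R : ℝ} (hcs : c * s ≠ 0) (hr : 0 < r)
    (hreg : ∀ x, r ≤ dist x z → dist x z ≤ R → RegularAt v x)
    (hin : ∀ x, dist x z = r → v x ≤ radialPower c s a z x)
    (hout : ∀ x, dist x z = R → v x ≤ radialPower c s a z x)
    (hlt : ∀ x, r < dist x z → dist x z < R → ∇ v x = ∇ (radialPower c s a z) x →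
      pLaplacian p (radialPower c s a z) x < pLaplacian p v x) :
    ∀ x, r ≤ dist x z → dist x z ≤ R → v x ≤ radialPower c s a z x := by
  have hne (x : E) (hx : r ≤ dist x z) : x ≠ z := dist_pos.1 (hr.trans_le hx)
  have hdist : Continuous fun x => dist x z := by fun_prop
  refine fun y hy₁ hy₂ => le_of_strict_barrier hp (K := {x | r ≤ dist x z} ∩ closedBall z R)
    ((isCompact_closedBall z R).inter_left (isClosed_le continuous_const hdist))
    (fun x hx => (hreg x hx.1 hx.2).1.continuousAt.continuousWithinAt)
    (fun x hx =>
      (contDiffAt_radialPower (n := 1) (hne x hx.1) c s a).continuousAt.continuousWithinAt)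
    ?_ y ⟨hy₁, hy₂⟩
  rintro x ⟨hx₁ : r ≤ dist x z, hx₂ : dist x z ≤ R⟩
  rcases hx₁.eq_or_lt with hinner | hx₁'
  · exact Or.inl (hin x hinner.symm)
  rcases hx₂.eq_or_lt with houter | hx₂'
  · exact Or.inl (hout x houter)
  refine Or.inr ⟨inter_mem ?_ (closedBall_mem_nhds_of_mem hx₂'),
    contDiffAt_radialPower (hne x hx₁) c s a, gradient_radialPower_ne_zero (hne x hx₁) hcs a,
    hreg x hx₁ hx₂, hlt x hx₁' hx₂'⟩
  filter_upwards [hdist.continuousAt.eventually_const_lt hx₁'] with y hy using hy.le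

lemma pLaplacian_radialPower_lt {c s κ : ℝ} (hcs : c * s ≠ 0)
    (hκ : c * s * (finrank ℝ E - 1 + (s - 1) * (p - 1)) = -(κ * |c * s|)) (hxz : x ≠ z)
    (hsmall : |c * s| ^ (q + 1 - p) < κ * ‖x - z‖ ^ ((1 - s) * (q + 1 - p) - 1)) (a : ℝ) :
    pLaplacian p (radialPower c s a z) x < -‖∇ (radialPower c s a z) x‖ ^ q := by
  have hR : 0 < ‖x - z‖ := norm_pos_iff.2 (sub_ne_zero.2 hxz)
  have hd : 0 < |c * s| := abs_pos.2 hcs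
  have hdq : |c * s| ^ q = |c * s| ^ (p - 2) * |c * s| * |c * s| ^ (q + 1 - p) := by
    rw [← Real.rpow_add_one hd.ne', ← Real.rpow_add hd]
    ring_nf
  have hRp : ‖x - z‖ ^ ((s - 1) * (p - 1) - 1) =
      ‖x - z‖ ^ ((s - 1) * q) * ‖x - z‖ ^ ((1 - s) * (q + 1 - p) - 1) := by
    rw [← Real.rpow_add hR]
    ring_nf
  have hfactor : 0 < |c * s| ^ (p - 2) * |c * s| * ‖x - z‖ ^ ((s - 1) * q) := by positivity
  calc pLaplacian p (radialPower c s a z) x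
      = -(|c * s| ^ (p - 2) * |c * s| * ‖x - z‖ ^ ((s - 1) * q) *
          (κ * ‖x - z‖ ^ ((1 - s) * (q + 1 - p) - 1))) := by
        rw [pLaplacian_radialPower hxz, hRp]
        linear_combination |c * s| ^ (p - 2) * ‖x - z‖ ^ ((s - 1) * q) *
          ‖x - z‖ ^ ((1 - s) * (q + 1 - p) - 1) * hκ
    _ < -(|c * s| ^ (p - 2) * |c * s| * ‖x - z‖ ^ ((s - 1) * q) * |c * s| ^ (q + 1 - p)) :=
        neg_lt_neg (mul_lt_mul_of_pos_left hsmall hfactor)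
    _ = -‖∇ (radialPower c s a z) x‖ ^ q := by
        rw [norm_gradient_radialPower hxz, Real.mul_rpow hd.le (by positivity),
          ← Real.rpow_mul hR.le, hdq]
        ring

lemma tendsto_rpow_nhdsGT_zero {s : ℝ} (hs : 0 < s) :
    Tendsto (fun r : ℝ => r ^ s) (𝓝[>] 0) (𝓝 0) := by
  have h := (Real.continuousAt_rpow_const 0 s (Or.inr hs.le)).tendsto
  rw [Real.zero_rpow hs.ne'] at h
  exact h.mono_left nhdsWithin_le_nhds

lemma exists_hopf_barrier (hp : 1 < p) (hq : p - 1 < q) (hρ : 0 < ρ) :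
    ∃ s > 0, ∀ᶠ δ in 𝓝[>] (0 : ℝ), ∀ (a : ℝ) (x z : E), ρ / 2 ≤ ‖x - z‖ → ‖x - z‖ ≤ ρ →
      pLaplacian p (radialPower (-δ) (-s) a z) x < -‖∇ (radialPower (-δ) (-s) a z) x‖ ^ q := by
  have hp₁ : 0 < p - 1 := by linarith
  -- This `s` makes the coefficient `n - 1 - (s + 1) (p - 1)` of the `p`-Laplacian negative.
  set s : ℝ := (finrank ℝ E + 1) / (p - 1)
  have hs : 0 < s := by positivity
  have hsp : s * (p - 1) = finrank ℝ E + 1 := div_mul_cancel₀ _ hp₁.ne'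
  set e := (1 - -s) * (q + 1 - p) - 1
  obtain ⟨t₀, ht₀, hmin⟩ := isCompact_Icc.exists_isMinOn (s := Icc (ρ / 2) ρ)
    ⟨ρ, by constructor <;> linarith⟩ (f := fun t : ℝ => t ^ e) fun t ht =>
      (Real.continuousAt_rpow_const _ _ (Or.inl (by linarith [ht.1]))).continuousWithinAt
  have ht₀pos : 0 < t₀ := by linarith [ht₀.1]
  have hlim : Tendsto (fun δ : ℝ => δ ^ (q + 1 - p) * s ^ (q + 1 - p)) (𝓝[>] 0) (𝓝 0) := by
    simpa using (tendsto_rpow_nhdsGT_zero (show 0 < q + 1 - p by linarith)).mul_const _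
  refine ⟨s, hs, ?_⟩
  filter_upwards [hlim.eventually (gt_mem_nhds (Real.rpow_pos_of_pos ht₀pos e)),
    self_mem_nhdsWithin] with δ hsmall (hδ : 0 < δ) a x z hx₁ hx₂
  have hle : t₀ ^ e ≤ ‖x - z‖ ^ e := hmin ⟨hx₁, hx₂⟩
  have habs : |-δ * -s| = δ * s := by rw [neg_mul_neg, abs_of_pos (mul_pos hδ hs)]
  refine pLaplacian_radialPower_lt (κ := p + 1) (by rw [neg_mul_neg]; positivity) ?_
    (sub_ne_zero.1 (norm_pos_iff.1 (by linarith))) ?_ a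
  · rw [habs]
    linear_combination -(δ * s) * hsp
  · rw [habs, Real.mul_rpow hδ.le hs.le]
    nlinarith [Real.rpow_pos_of_pos ht₀pos e]

lemma exists_le_radialPower_on_annulus (hp : 1 < p) (hq : p - 1 < q) (hρ : 0 < ρ)
    (hreg : ∀ x ∈ closedBall z ρ, RegularAt v x)
    (hsub : ∀ x ∈ closedBall z ρ, ∇ v x ≠ 0 → -‖∇ v x‖ ^ q ≤ pLaplacian p v x)
    (hle : ∀ x ∈ closedBall z ρ, v x ≤ M) (hlt : ∀ x ∈ closedBall z (ρ / 2), v x < M) :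
    ∃ δ > 0, ∃ s > 0, ∀ x, ρ / 2 ≤ dist x z → dist x z ≤ ρ →
      v x ≤ radialPower (-δ) (-s) (M + δ * ρ ^ (-s)) z x := by
  have hcont : ContinuousOn v (closedBall z (ρ / 2)) := fun x hx =>
    (hreg x (closedBall_subset_closedBall (by linarith) hx)).1.continuousAt.continuousWithinAt
  obtain ⟨x₂, hx₂, hmax⟩ := (isCompact_closedBall z (ρ / 2)).exists_isMaxOn
    ⟨z, mem_closedBall_self (by linarith)⟩ hcont
  obtain ⟨s, hs, hbarrier⟩ := exists_hopf_barrier (E := E) hp hq hρ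
  have hsmall : ∀ᶠ δ in 𝓝[>] (0 : ℝ), δ * ((ρ / 2) ^ (-s) - ρ ^ (-s)) < M - v x₂ := by
    have hcontδ : Continuous fun δ : ℝ => δ * ((ρ / 2) ^ (-s) - ρ ^ (-s)) := by fun_prop
    exact nhdsWithin_le_nhds (hcontδ.continuousAt.eventually_lt_const (by simpa using hlt x₂ hx₂))
  obtain ⟨δ, ⟨hsuper, hδM⟩, hδ : 0 < δ⟩ :=
    ((hbarrier.and hsmall).and self_mem_nhdsWithin).exists
  have hcs : -δ * -s ≠ 0 := by rw [neg_mul_neg]; positivity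
  refine ⟨δ, hδ, s, hs, le_radialPower_on_annulus hp.le hcs (by positivity)
    (fun x _ hx => hreg x hx) (fun x hx => ?_) (fun x hx => ?_) (fun x hx₁ hx₂ hgrad => ?_)⟩
  · have : v x ≤ v x₂ := hmax hx.le
    rw [radialPower, ← dist_eq_norm, hx]
    linarith
  · have := hle x hx.le
    rw [radialPower, ← dist_eq_norm, hx]
    linarith
  · have hψ₀ := gradient_radialPower_ne_zero (dist_pos.1 (by linarith)) hcs (M + δ * ρ ^ (-s))
    refine (hsuper _ x z (by rw [← dist_eq_norm]; exact hx₁.le)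
      (by rw [← dist_eq_norm]; exact hx₂.le)).trans_le ?_
    rw [← hgrad] at hψ₀ ⊢
    exact hsub x hx₂.le hψ₀

lemma nonpos_of_hasDerivAt_of_eventually_le {f : ℝ → ℝ} {f' t₀ : ℝ} (hf : HasDerivAt f f' t₀)
    (hle : ∀ᶠ t in 𝓝[>] t₀, f t ≤ f t₀) : f' ≤ 0 := by
  refine le_of_tendsto ((hasDerivWithinAt_iff_tendsto_slope' self_notMem_Ioi).1
    hf.hasDerivWithinAt) ?_
  filter_upwards [hle, self_mem_nhdsWithin] with t ht (ht₀ : t₀ < t)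
  rw [slope_def_field]
  exact div_nonpos_of_nonpos_of_nonneg (by linarith) (by linarith)

lemma hasDerivAt_comp_add_smul (hv : DifferentiableAt ℝ v x) (d : E) :
    HasDerivAt (fun t : ℝ => v (x + t • d)) ⟪∇ v x, d⟫ 0 := by
  have hx : HasFDerivAt v (fderiv ℝ v x) (x + (0 : ℝ) • d) := by simpa using hv.hasFDerivAt
  rw [inner_gradient_left]
  exact hx.comp_hasDerivAt 0 (hasDerivAt_add_smul x d 0)

lemma gradient_ne_zero_of_hopf (hp : 1 < p) (hq : p - 1 < q)
    (hreg : ∀ x ∈ closedBall z ρ, RegularAt v x)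
    (hsub : ∀ x ∈ closedBall z ρ, ∇ v x ≠ 0 → -‖∇ v x‖ ^ q ≤ pLaplacian p v x)
    (hρ : 0 < ρ) (hx : dist x z = ρ) (hle : ∀ y ∈ closedBall z ρ, v y ≤ v x)
    (hlt : ∀ y ∈ ball z ρ, v y < v x) : ∇ v x ≠ 0 := by
  obtain ⟨δ, hδ, s, hs, hbound⟩ := exists_le_radialPower_on_annulus hp hq hρ hreg hsub hle
    fun y hy => hlt y (closedBall_subset_ball (by linarith) hy)
  set ψ := radialPower (-δ) (-s) (v x + δ * ρ ^ (-s)) z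
  have hxz : x ≠ z := dist_pos.1 (hx ▸ hρ)
  have hψx : ψ x = v x := by
    simp only [ψ, radialPower, ← dist_eq_norm, hx]
    ring
  have hψd : ⟪∇ ψ x, z - x⟫ < 0 := by
    rw [gradient_radialPower hxz, inner_smul_left, ← neg_sub x z, inner_neg_right,
      real_inner_self_eq_norm_sq, ← dist_eq_norm, hx, neg_mul_neg, conj_trivial, mul_neg,
      neg_lt_zero]
    positivity
  have hderiv := (hasDerivAt_comp_add_smul (hreg x hx.le).differentiableAt (z - x)).sub
    (hasDerivAt_comp_add_smul (v := ψ)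
      ((contDiffAt_radialPower (n := 1) hxz _ _ _).differentiableAt (by norm_num)) (z - x))
  have hnonpos := nonpos_of_hasDerivAt_of_eventually_le hderiv (by
    filter_upwards [nhdsWithin_le_nhds (gt_mem_nhds (show (0 : ℝ) < 1 / 2 by norm_num)),
      self_mem_nhdsWithin] with t ht₁ (ht₀ : 0 < t)
    have hdist : dist (x + t • (z - x)) z = (1 - t) * ρ := by
      rw [dist_eq_norm, show x + t • (z - x) - z = (1 - t) • (x - z) by module, norm_smul,
        Real.norm_eq_abs, abs_of_pos (by linarith), ← dist_eq_norm, hx]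
    have := hbound (x + t • (z - x)) (by rw [hdist]; nlinarith) (by rw [hdist]; nlinarith)
    simpa [hψx] using this)
  intro h0
  rw [h0, inner_zero_left] at hnonpos
  linarith

lemma eq_of_forall_le_of_subsolution (hp : 1 < p) (hq : p - 1 < q) {x₀ : E} {r : ℝ}
    (hreg : ∀ x ∈ ball x₀ r, RegularAt v x)
    (hsub : ∀ x ∈ ball x₀ r, ∇ v x ≠ 0 → -‖∇ v x‖ ^ q ≤ pLaplacian p v x)
    (hmax : ∀ x ∈ ball x₀ r, v x ≤ v x₀) : ∀ z ∈ ball x₀ (r / 4), v z = v x₀ := by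
  intro z hz
  by_contra hne
  rw [mem_ball] at hz
  have hr : 0 < r := by linarith [dist_nonneg (x := z) (y := x₀)]
  have hhalf : closedBall x₀ (r / 2) ⊆ ball x₀ r := closedBall_subset_ball (by linarith)
  have hcont : ContinuousOn v (closedBall x₀ (r / 2)) :=
    fun x hx => (hreg x (hhalf hx)).1.continuousAt.continuousWithinAt
  set S := closedBall x₀ (r / 2) ∩ v ⁻¹' {v x₀}
  have hx₀ : x₀ ∈ S := ⟨mem_closedBall_self (by linarith), rfl⟩
  have hS : IsCompact S := (isCompact_closedBall x₀ (r / 2)).of_isClosed_subset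
    (hcont.preimage_isClosed_of_isClosed isClosed_closedBall isClosed_singleton) inter_subset_left
  obtain ⟨x₁, ⟨hx₁, hvx₁ : v x₁ = v x₀⟩, hnearest⟩ := hS.exists_infDist_eq_dist ⟨x₀, hx₀⟩ z
  set ρ := infDist z S
  have hρ₀ : ρ ≤ dist z x₀ := infDist_le_dist_of_mem hx₀
  have hρ : 0 < ρ := by
    rw [hnearest]
    exact dist_pos.2 fun h => hne (h ▸ hvx₁)
  have hball : closedBall z ρ ⊆ closedBall x₀ (r / 2) := closedBall_subset_closedBall' (by linarith)
  refine gradient_ne_zero_of_hopf (x := x₁) hp hq (fun x hx => hreg x (hhalf (hball hx)))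
    (fun x hx => hsub x (hhalf (hball hx))) hρ (by rw [dist_comm, hnearest])
    (fun y hy => hvx₁ ▸ hmax y (hhalf (hball hy))) (fun y hy => ?_) ?_
  · refine (hvx₁ ▸ hmax y (hhalf (hball (ball_subset_closedBall hy)))).lt_of_ne fun h => ?_
    exact (mem_ball'.1 hy).not_ge
      (infDist_le_dist_of_mem ⟨hball (ball_subset_closedBall hy), h.trans hvx₁⟩)
  · have hloc : IsLocalMax v x₁ := by
      filter_upwards [isOpen_ball.mem_nhds (hhalf hx₁)] with y hy using hvx₁ ▸ hmax y hy
    rw [gradient, hloc.fderiv_eq_zero, map_zero]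

end StrongMaximumPrinciple

section Comparison

variable {E : Type*} [NormedAddCommGroup E] [InnerProductSpace ℝ E] [FiniteDimensional ℝ E]
  {p q c S : ℝ} {Ω K K' : Set E} {u w : E → ℝ} {x a : E}

/-- Subsolutions of `-Δ_p u + |∇u|^q ≤ 0`, tested only where the gradient does not vanish. -/
def IsSubsolutionOn (p q : ℝ) (u : E → ℝ) (Ω : Set E) : Prop :=
  ∀ x ∈ Ω, RegularAt u x ∧ (∇ u x ≠ 0 → ‖∇ u x‖ ^ q ≤ pLaplacian p u x)

/-- Strict supersolutions of `-Δ_p w + |∇w|^q > 0`, tested only where the gradient does not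
vanish. -/
def IsStrictSupersolutionOn (p q : ℝ) (w : E → ℝ) (Ω : Set E) : Prop :=
  ∀ x ∈ Ω, RegularAt w x ∧ (∇ w x ≠ 0 → pLaplacian p w x < ‖∇ w x‖ ^ q)

lemma IsSubsolutionOn.continuousOn (hu : IsSubsolutionOn p q u Ω) : ContinuousOn u Ω :=
  fun x hx => (hu x hx).1.1.continuousAt.continuousWithinAt

lemma IsStrictSupersolutionOn.continuousOn (hw : IsStrictSupersolutionOn p q w Ω) :
    ContinuousOn w Ω :=
  fun x hx => (hw x hx).1.1.continuousAt.continuousWithinAt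

lemma gradient_eq_zero_of_isLocalMax_sub_comp_add (hp : 1 ≤ p) (hu : IsSubsolutionOn p q u Ω)
    (hw : IsStrictSupersolutionOn p q w Ω) (hx : x ∈ Ω) (hxa : x + a ∈ Ω)
    (hmax : IsLocalMax (fun y => u y - w (y + a)) x) : ∇ w (x + a) = 0 := by
  by_contra h0
  obtain ⟨hur, hsub⟩ := hu x hx
  obtain ⟨hwr, hsup⟩ := hw (x + a) hxa
  have hshift := hwr.comp_add_right
  have hgrad : ∇ u x = ∇ w (x + a) := by
    rw [← gradient_comp_add_right]
    exact gradient_eq_of_isLocalMax_sub hur.differentiableAt hshift.differentiableAt hmax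
  have hle := pLaplacian_le_of_isLocalMax_sub hp (hur.2 (hgrad ▸ h0))
    (hshift.2 (by rwa [gradient_comp_add_right])) hmax (by rwa [gradient_comp_add_right])
  rw [pLaplacian_comp_add_right] at hle
  have hlt := hsup h0
  rw [← hgrad] at hlt
  linarith [hsub (hgrad ▸ h0)]

lemma nonpos_of_gradient_eq_zero_of_forall_le {ε t₁ : ℝ}
    (hw : DifferentiableAt ℝ w (x + t₁ • a)) (hgrad : ∇ w (x + t₁ • a) = 0) (ht₁ : 0 < t₁)
    (hmax : ∀ t ∈ Icc 0 t₁, -w (x + t • a) - ε * t ≤ -w (x + t₁ • a) - ε * t₁) : ε ≤ 0 := by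
  have hderiv := ((hasDerivAt_comp_add_smul hw (-a)).neg).add
    ((hasDerivAt_id (0 : ℝ)).const_mul ε)
  have hnonpos := nonpos_of_hasDerivAt_of_eventually_le hderiv (by
    filter_upwards [Ioo_mem_nhdsGT ht₁] with s hs
    have := hmax (t₁ - s) ⟨by linarith [hs.2], by linarith [hs.1]⟩
    rw [show x + (t₁ - s) • a = x + t₁ • a + s • -a by module] at this
    simp only [Pi.add_apply, Pi.neg_apply, zero_smul, add_zero, id_eq, mul_zero]
    linarith)
  rw [hgrad, inner_zero_left] at hnonpos
  linarith

-- Maximize `u y - w (y + t • a) - ε t`: the linear penalty forces `∇ w ≠ 0` at the maximum.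
lemma sub_comp_add_le (hp : 1 ≤ p) (hK' : IsCompact K') (hKK' : ∀ x ∈ K, K' ∈ 𝓝 x)
    (hΩ : ∀ x ∈ K', ∀ t ∈ Icc (0 : ℝ) 1, x + t • a ∈ Ω) (hu : IsSubsolutionOn p q u Ω)
    (hw : IsStrictSupersolutionOn p q w Ω) (hS : ∀ x ∈ K', u x - w x ≤ S)
    (hbd : ∀ x ∈ K' \ K, ∀ t ∈ Icc (0 : ℝ) 1, u x - w (x + t • a) ≤ S) :
    ∀ x ∈ K', u x - w (x + a) ≤ S := by
  intro x hx
  by_contra! hcon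
  obtain ⟨ε, hε, hεS⟩ : ∃ ε > 0, S + ε < u x - w (x + a) :=
    ⟨(u x - w (x + a) - S) / 2, by linarith, by linarith⟩
  have hK'Ω : K' ⊆ Ω := fun y hy => by simpa using hΩ y hy 0 (by simp)
  have hcont : ContinuousOn (fun z : E × ℝ => u z.1 - w (z.1 + z.2 • a) - ε * z.2)
      (K' ×ˢ Icc 0 1) := by
    refine ((hu.continuousOn.comp continuousOn_fst fun z hz => hK'Ω hz.1).sub
      (hw.continuousOn.comp (f := fun z : E × ℝ => z.1 + z.2 • a) (by fun_prop)
        fun z hz => hΩ z.1 hz.1 z.2 hz.2)).sub (by fun_prop)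
  obtain ⟨⟨x₁, t₁⟩, ⟨hx₁ : x₁ ∈ K', ht₁ : t₁ ∈ Icc (0 : ℝ) 1⟩, hmax⟩ :=
    (hK'.prod isCompact_Icc).exists_isMaxOn ⟨(x, 1), hx, by simp⟩ hcont
  have hmax' (y : E) (hy : y ∈ K') (t : ℝ) (ht : t ∈ Icc (0 : ℝ) 1) :
      u y - w (y + t • a) - ε * t ≤ u x₁ - w (x₁ + t₁ • a) - ε * t₁ :=
    hmax (show (y, t) ∈ K' ×ˢ Icc (0 : ℝ) 1 from ⟨hy, ht⟩)
  have hbig : S < u x₁ - w (x₁ + t₁ • a) - ε * t₁ :=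
    lt_of_lt_of_le (by rw [one_smul]; linarith) (hmax' x hx 1 (by simp))
  have ht₁pos : 0 < t₁ := by
    refine ht₁.1.lt_of_ne' fun h => ?_
    rw [h, zero_smul, add_zero] at hbig
    linarith [hS x₁ hx₁]
  have hx₁K : x₁ ∈ K := by
    by_contra h
    linarith [hbd x₁ ⟨hx₁, h⟩ t₁ ht₁, mul_pos hε ht₁pos]
  have hgrad : ∇ w (x₁ + t₁ • a) = 0 := by
    refine gradient_eq_zero_of_isLocalMax_sub_comp_add hp hu hw (hK'Ω hx₁) (hΩ x₁ hx₁ t₁ ht₁) ?_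
    filter_upwards [hKK' x₁ hx₁K] with y hy
    linarith [hmax' y hy t₁ ht₁]
  refine hε.not_ge (nonpos_of_gradient_eq_zero_of_forall_le
    (hw _ (hΩ x₁ hx₁ t₁ ht₁)).1.differentiableAt hgrad ht₁pos fun t ht => ?_)
  linarith [hmax' x₁ hx₁ t ⟨ht.1, ht.2.trans ht₁.2⟩]

lemma exists_forall_sub_comp_add_le (hp : 1 ≤ p) (hΩ : IsOpen Ω) (hK : IsCompact K) (hKΩ : K ⊆ Ω)
    (hu : IsSubsolutionOn p q u Ω) (hw : IsStrictSupersolutionOn p q w Ω)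
    (hc : ∀ x ∈ Ω \ K, u x - w x ≤ c) (hcS : c < S) (hS : ∀ x ∈ Ω, u x - w x ≤ S) :
    ∃ r > 0, cthickening r K ⊆ Ω ∧
      ∀ x ∈ cthickening r K, ∀ a : E, ‖a‖ ≤ r → u x - w (x + a) ≤ S := by
  obtain ⟨R, hR, hRΩ⟩ := hK.exists_cthickening_subset_open hΩ hKΩ
  obtain ⟨ρ, hρ, hρw⟩ := Metric.uniformContinuousOn_iff.1
    (hK.cthickening.uniformContinuousOn_of_continuous (hw.continuousOn.mono hRΩ)) (S - c)
    (by linarith)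
  obtain ⟨r, hr, hrR, hrρ⟩ : ∃ r > 0, r + r ≤ R ∧ r < ρ :=
    ⟨min (R / 2) (ρ / 2), by positivity, by linarith [min_le_left (R / 2) (ρ / 2)],
      (min_le_right _ _).trans_lt (by linarith)⟩
  have hmem (x : E) (hx : x ∈ cthickening r K) (a : E) (ha : ‖a‖ ≤ r) :
      x + a ∈ cthickening R K := by
    refine cthickening_mono hrR K (cthickening_cthickening_subset hr.le hr.le K
      (mem_cthickening_of_dist_le _ x _ _ hx ?_))
    rwa [dist_eq_norm, add_sub_cancel_left]
  have hself (x : E) (hx : x ∈ cthickening r K) : x ∈ cthickening R K := by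
    simpa using hmem x hx 0 (by simpa using hr.le)
  refine ⟨r, hr, fun x hx => hRΩ (hself x hx), fun x hx a ha => ?_⟩
  have hta (t : ℝ) (ht : t ∈ Icc (0 : ℝ) 1) : ‖t • a‖ ≤ r := by
    rw [norm_smul, Real.norm_of_nonneg ht.1]
    nlinarith [ht.1, ht.2, norm_nonneg a]
  refine sub_comp_add_le hp hK.cthickening (fun y hy => mem_of_superset
    (isOpen_thickening.mem_nhds (self_subset_thickening hr K hy))
    (thickening_subset_cthickening _ _)) (fun y hy t ht => hRΩ (hmem y hy _ (hta t ht))) hu hw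
    (fun y hy => hS y (hRΩ (hself y hy))) (fun y hy t ht => ?_) x hx
  have hclose := hρw y (hself y hy.1) (y + t • a) (hmem y hy.1 _ (hta t ht)) (by
    rw [dist_eq_norm, sub_add_cancel_left, norm_neg]
    exact (hta t ht).trans_lt hrρ)
  linarith [hc y ⟨hRΩ (hself y hy.1), hy.2⟩, (abs_lt.1 (Real.dist_eq _ _ ▸ hclose)).2]

lemma sub_eventuallyEq_of_forall_sub_le (hp : 1 < p) (hq : p - 1 < q) {r : ℝ} (hr : 0 < r)
    (hu : IsSubsolutionOn p q u (ball x r)) (hw : IsStrictSupersolutionOn p q w (ball x r))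
    (hmaxu : ∀ y ∈ ball x r, u y ≤ u x) (hminw : ∀ y ∈ ball x r, w x ≤ w y) :
    ∀ᶠ y in 𝓝 x, u y - w y = u x - w x := by
  have hueq := eq_of_forall_le_of_subsolution hp hq (fun y hy => (hu y hy).1)
    (fun y hy h0 => (neg_nonpos.2 (by positivity)).trans
      ((Real.rpow_nonneg (norm_nonneg _) q).trans ((hu y hy).2 h0))) hmaxu
  have hweq := eq_of_forall_le_of_subsolution (v := fun y => -w y) hp hq
    (fun y hy => (hw y hy).1.neg) (fun y hy h0 => by
      rw [gradient_neg, neg_ne_zero] at h0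
      rw [gradient_neg, norm_neg, pLaplacian_neg]
      exact neg_le_neg ((hw y hy).2 h0).le) (fun y hy => neg_le_neg (hminw y hy))
  filter_upwards [ball_mem_nhds x (show 0 < r / 4 by positivity)] with y hy
  rw [hueq y hy, neg_injective (hweq y hy)]

theorem sub_le_of_forall_sub_le_off_compact [Nontrivial E] (hp : 1 < p) (hq : p - 1 < q)
    (hΩ : IsOpen Ω) (hK : IsCompact K) (hKΩ : K ⊆ Ω) (hu : IsSubsolutionOn p q u Ω)
    (hw : IsStrictSupersolutionOn p q w Ω) (hc : ∀ x ∈ Ω \ K, u x - w x ≤ c) :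
    ∀ x ∈ Ω, u x - w x ≤ c := by
  intro x hx
  by_contra! hcon
  have hxK : x ∈ K := by_contra fun h => (hc x ⟨hx, h⟩).not_gt hcon
  have hcont : ContinuousOn (fun y => u y - w y) K :=
    (hu.continuousOn.sub hw.continuousOn).mono hKΩ
  obtain ⟨x₀, hx₀, hmax⟩ := hK.exists_isMaxOn ⟨x, hxK⟩ hcont
  set S := u x₀ - w x₀
  have hcS : c < S := hcon.trans_le (hmax hxK)
  have hS (y : E) (hy : y ∈ Ω) : u y - w y ≤ S := by
    by_cases h : y ∈ K
    · exact hmax h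
    · exact (hc y ⟨hy, h⟩).trans hcS.le
  obtain ⟨r, hr, hrΩ, hshift⟩ := exists_forall_sub_comp_add_le hp.le hΩ hK hKΩ hu hw hc hcS hS
  set T := K ∩ (fun y => u y - w y) ⁻¹' {S}
  have hclosed : IsClosed T := hcont.preimage_isClosed_of_isClosed hK.isClosed isClosed_singleton
  have hopen : IsOpen T := by
    refine isOpen_iff_mem_nhds.2 fun y ⟨hyK, (hyS : u y - w y = S)⟩ => ?_
    have hball : ball y r ⊆ cthickening r K :=
      (ball_subset_thickening hyK r).trans (thickening_subset_cthickening r K)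
    have hconst := sub_eventuallyEq_of_forall_sub_le hp hq hr (fun z hz => hu z (hrΩ (hball hz)))
      (fun z hz => hw z (hrΩ (hball hz)))
      (fun z hz => by
        have := hshift z (hball hz) (y - z) (by rw [← dist_eq_norm']; exact hz.le)
        rw [add_sub_cancel] at this
        linarith)
      (fun z hz => by
        have := hshift y (hball (mem_ball_self hr)) (z - y) (by rw [← dist_eq_norm]; exact hz.le)
        rw [add_sub_cancel] at this
        linarith)
    filter_upwards [hconst, hΩ.mem_nhds (hKΩ hyK)] with z hz hzΩ
    refine ⟨by_contra fun h => ?_, hz.trans hyS⟩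
    linarith [hc z ⟨hzΩ, h⟩]
  have := NormedSpace.noncompactSpace ℝ E
  rcases isClopen_iff.1 ⟨hclosed, hopen⟩ with hempty | huniv
  · exact notMem_empty x₀ (hempty ▸ ⟨hx₀, rfl⟩)
  · exact noncompact_univ E (hK.of_isClosed_subset (huniv ▸ hclosed) (huniv ▸ inter_subset_left))

end Comparison

section PuncturedSpace

variable {E : Type*} [NormedAddCommGroup E] {p q r B C β : ℝ} {f : E → ℝ} {x y z : E}

lemma ne_zero_of_mem_closedBall_half_norm (hx : x ≠ 0) (hy : y ∈ closedBall x (‖x‖ / 2)) :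
    y ≠ 0 := by
  rintro rfl
  rw [mem_closedBall, dist_zero_left] at hy
  linarith [norm_pos_iff.2 hx]

variable [InnerProductSpace ℝ E]

lemma half_le_norm_of_mem_segment (hx : ‖x‖ = r) (hy : ‖y‖ = r) (hxy : 0 ≤ ⟪x, y⟫)
    (hz : z ∈ segment ℝ x y) : r / 2 ≤ ‖z‖ := by
  obtain ⟨a, b, ha, hb, hab, rfl⟩ := hz
  have hsq : ‖a • x + b • y‖ ^ 2 = (a ^ 2 + b ^ 2) * r ^ 2 + 2 * (a * b * ⟪x, y⟫) := by
    rw [norm_add_sq_real, norm_smul_of_nonneg ha, norm_smul_of_nonneg hb, inner_smul_left,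
      inner_smul_right, hx, hy, conj_trivial]
    ring
  have hab2 : 1 / 4 ≤ a ^ 2 + b ^ 2 := by nlinarith [sq_nonneg (a - b)]
  refine le_of_sq_le_sq ?_ (norm_nonneg _)
  have : 0 ≤ a * b * ⟪x, y⟫ := by positivity
  nlinarith [sq_nonneg r]

variable [FiniteDimensional ℝ E]

lemma norm_gradient (f : E → ℝ) (x : E) : ‖∇ f x‖ = ‖fderiv ℝ f x‖ := by
  simp [gradient]

lemma abs_sub_le_of_inner_nonneg (hf : ∀ z, r / 2 ≤ ‖z‖ → DifferentiableAt ℝ f z)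
    (hB : ∀ z, r / 2 ≤ ‖z‖ → ‖∇ f z‖ ≤ B) (hx : ‖x‖ = r) (hy : ‖y‖ = r) (hxy : 0 ≤ ⟪x, y⟫) :
    |f x - f y| ≤ 2 * B * r := by
  have hB₀ : 0 ≤ B := (norm_nonneg _).trans (hB x (by linarith [norm_nonneg x]))
  have hdiam : ‖x - y‖ ≤ 2 * r := (norm_sub_le _ _).trans (by rw [hx, hy, two_mul])
  calc |f x - f y| ≤ B * ‖x - y‖ := (convex_segment x y).norm_image_sub_le_of_norm_fderiv_le
        (𝕜 := ℝ) (fun z hz => hf z (half_le_norm_of_mem_segment hx hy hxy hz))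
        (fun z hz => norm_gradient f z ▸ hB z (half_le_norm_of_mem_segment hx hy hxy hz))
        (right_mem_segment ℝ x y) (left_mem_segment ℝ x y)
    _ ≤ 2 * B * r := by nlinarith

lemma exists_inner_eq_zero_of_norm (hn : 1 < finrank ℝ E) (x : E) (hr : 0 ≤ r) :
    ∃ z : E, ‖z‖ = r ∧ ⟪x, z⟫ = 0 := by
  have hdim := Submodule.finrank_add_finrank_orthogonal (ℝ ∙ x)
  have hspan : finrank ℝ (ℝ ∙ x) ≤ 1 := by simpa using finrank_span_le_card ({x} : Set E)
  have : Nontrivial (ℝ ∙ x)ᗮ := Module.nontrivial_of_finrank_pos (R := ℝ) (by omega)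
  obtain ⟨z, hz⟩ := exists_norm_eq (ℝ ∙ x)ᗮ hr
  exact ⟨z, hz, Submodule.mem_orthogonal_singleton_iff_inner_right.1 z.2⟩

lemma abs_sub_le_of_norm_eq (hn : 1 < finrank ℝ E)
    (hf : ∀ z, r / 2 ≤ ‖z‖ → DifferentiableAt ℝ f z) (hB : ∀ z, r / 2 ≤ ‖z‖ → ‖∇ f z‖ ≤ B)
    (hx : ‖x‖ = r) (hy : ‖y‖ = r) : |f x - f y| ≤ 4 * B * r := by
  obtain ⟨z, hz, hxz, hzy⟩ : ∃ z : E, ‖z‖ = r ∧ ⟪x, z⟫ = 0 ∧ 0 ≤ ⟪z, y⟫ := by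
    obtain ⟨z, hz, hxz⟩ := exists_inner_eq_zero_of_norm hn x (hx ▸ norm_nonneg x)
    rcases le_total 0 ⟪z, y⟫ with h | h
    · exact ⟨z, hz, hxz, h⟩
    · exact ⟨-z, by rwa [norm_neg], by rw [inner_neg_right, hxz, neg_zero],
        by rwa [inner_neg_left, neg_nonneg]⟩
  linarith [abs_sub_le (f x) (f z) (f y), abs_sub_le_of_inner_nonneg hf hB hx hz hxz.ge,
    abs_sub_le_of_inner_nonneg hf hB hz hy hzy]

lemma abs_sub_le_of_one_le_smul (hβ : 0 < β) (hf : ∀ z ≠ 0, DifferentiableAt ℝ f z)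
    (hC : 0 ≤ C) (hB : ∀ z ≠ 0, ‖∇ f z‖ ≤ C * ‖z‖ ^ (-β - 1)) (hx : x ≠ 0) {t : ℝ} (ht : 1 ≤ t) :
    |f (t • x) - f x| ≤ C / β * ‖x‖ ^ (-β) := by
  have hxpos : 0 < ‖x‖ := norm_pos_iff.2 hx
  have hderiv (s : ℝ) (hs : 1 ≤ s) :
      HasDerivAt (fun s : ℝ => f (s • x) - f x) ⟪∇ f (s • x), x⟫ s := by
    have hs₀ : s • x ≠ 0 := smul_ne_zero (by positivity) hx
    rw [inner_gradient_left]
    exact ((hf _ hs₀).hasFDerivAt.comp_hasDerivAt s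
      (by simpa using (hasDerivAt_id s).smul_const x)).sub_const (f x)
  have hbound (s : ℝ) (hs : 1 ≤ s) : ‖⟪∇ f (s • x), x⟫‖ ≤ C * ‖x‖ ^ (-β) * s ^ (-β - 1) := by
    have hs₀ : 0 < s := by linarith
    calc ‖⟪∇ f (s • x), x⟫‖ ≤ C * ‖s • x‖ ^ (-β - 1) * ‖x‖ :=
          (abs_real_inner_le_norm _ _).trans (mul_le_mul_of_nonneg_right
            (hB _ (smul_ne_zero hs₀.ne' hx)) hxpos.le)
      _ = C * (‖x‖ ^ (-β - 1) * ‖x‖) * s ^ (-β - 1) := by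
          rw [norm_smul_of_nonneg hs₀.le, Real.mul_rpow hs₀.le hxpos.le]
          ring
      _ = C * ‖x‖ ^ (-β) * s ^ (-β - 1) := by rw [← Real.rpow_add_one hxpos.ne', sub_add_cancel]
  have hmajorant (s : ℝ) (hs : 1 ≤ s) : HasDerivAt
      (fun s : ℝ => C * ‖x‖ ^ (-β) / β * (1 - s ^ (-β))) (C * ‖x‖ ^ (-β) * s ^ (-β - 1)) s := by
    refine (((Real.hasDerivAt_rpow_const (p := -β) (Or.inl (by linarith))).const_sub 1).const_mul
      (C * ‖x‖ ^ (-β) / β)).congr_deriv ?_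
    field_simp
  have hle := image_norm_le_of_norm_deriv_right_le_deriv_boundary'
    (fun s hs => (hderiv s hs.1).continuousAt.continuousWithinAt)
    (fun s hs => (hderiv s hs.1).hasDerivWithinAt) (by simp)
    (fun s hs => (hmajorant s hs.1).continuousAt.continuousWithinAt)
    (fun s hs => (hmajorant s hs.1).hasDerivWithinAt) (fun s hs => hbound s hs.1)
    (right_mem_Icc.2 ht)
  rw [Real.norm_eq_abs] at hle
  have hnonneg : 0 ≤ C / β * ‖x‖ ^ (-β) * t ^ (-β) := by positivity
  linarith [show C * ‖x‖ ^ (-β) / β * (1 - t ^ (-β)) =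
    C / β * ‖x‖ ^ (-β) - C / β * ‖x‖ ^ (-β) * t ^ (-β) by ring]

lemma exists_abs_sub_le_norm_rpow (hn : 1 < finrank ℝ E) (hβ : 0 < β) (hC : 0 ≤ C)
    (hf : ∀ z ≠ 0, DifferentiableAt ℝ f z) (hB : ∀ z ≠ 0, ‖∇ f z‖ ≤ C * ‖z‖ ^ (-β - 1)) :
    ∃ D, ∀ x y : E, x ≠ 0 → ‖x‖ ≤ ‖y‖ → |f x - f y| ≤ D * ‖x‖ ^ (-β) := by
  refine ⟨4 * C * (1 / 2) ^ (-β - 1) + C / β, fun x y hx hxy => ?_⟩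
  have hxpos : 0 < ‖x‖ := norm_pos_iff.2 hx
  have hypos : 0 < ‖y‖ := hxpos.trans_le hxy
  have hne (w : E) (hw : ‖x‖ / 2 ≤ ‖w‖) : w ≠ 0 := norm_pos_iff.1 (by linarith)
  obtain ⟨z, hz, hzy⟩ : ∃ z : E, ‖z‖ = ‖x‖ ∧ (‖y‖ / ‖x‖) • z = y := by
    refine ⟨(‖x‖ / ‖y‖) • y, ?_, ?_⟩
    · rw [norm_smul_of_nonneg (by positivity), div_mul_cancel₀ _ hypos.ne']
    · rw [smul_smul, div_mul_div_cancel₀ hxpos.ne', div_self hypos.ne', one_smul]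
  have hray := abs_sub_le_of_one_le_smul hβ hf hC hB (norm_pos_iff.1 (hz ▸ hxpos))
    ((one_le_div hxpos).2 hxy)
  have hsphere := abs_sub_le_of_norm_eq (B := C * (‖x‖ / 2) ^ (-β - 1)) hn
    (fun w hw => hf w (hne w hw)) (fun w hw => (hB w (hne w hw)).trans (mul_le_mul_of_nonneg_left
      (Real.rpow_le_rpow_of_nonpos (by positivity) hw (by linarith)) hC)) rfl hz
  have hpow : (‖x‖ / 2) ^ (-β - 1) * ‖x‖ = (1 / 2) ^ (-β - 1) * ‖x‖ ^ (-β) := by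
    rw [div_eq_mul_one_div, Real.mul_rpow hxpos.le (by norm_num), mul_right_comm,
      ← Real.rpow_add_one hxpos.ne', sub_add_cancel, mul_comm]
  rw [hzy, hz, abs_sub_comm] at hray
  calc |f x - f y| ≤ 4 * (C * (‖x‖ / 2) ^ (-β - 1)) * ‖x‖ + C / β * ‖x‖ ^ (-β) :=
        (abs_sub_le _ (f z) _).trans (add_le_add hsphere hray)
    _ = (4 * C * (1 / 2) ^ (-β - 1) + C / β) * ‖x‖ ^ (-β) := by linear_combination 4 * C * hpow

theorem exists_tendsto_cocompact (hn : 1 < finrank ℝ E) (hβ : 0 < β) (hC : 0 ≤ C)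
    (hf : ∀ z ≠ 0, DifferentiableAt ℝ f z) (hB : ∀ z ≠ 0, ‖∇ f z‖ ≤ C * ‖z‖ ^ (-β - 1)) :
    ∃ M, Tendsto f (cocompact E) (𝓝 M) := by
  obtain ⟨D, hD⟩ := exists_abs_sub_le_norm_rpow hn hβ hC hf hB
  have : Nontrivial E := Module.nontrivial_of_finrank_pos (R := ℝ) (by omega)
  have := NormedSpace.noncompactSpace ℝ E
  have hnorm : Tendsto (fun x : E => ‖x‖) (cocompact E) atTop := tendsto_norm_cocompact_atTop
  refine cauchy_map_iff_exists_tendsto.1 (Metric.cauchy_iff.2 ⟨inferInstance, fun ε hε => ?_⟩)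
  have hlim : Tendsto (fun x : E => D * ‖x‖ ^ (-β)) (cocompact E) (𝓝 0) := by
    simpa using ((tendsto_rpow_neg_atTop hβ).comp hnorm).const_mul D
  refine ⟨_, image_mem_map ((hlim.eventually (gt_mem_nhds hε)).and
    (hnorm.eventually (eventually_gt_atTop 0))), ?_⟩
  rintro _ ⟨x, ⟨hxε, hx⟩, rfl⟩ _ ⟨y, ⟨hyε, hy⟩, rfl⟩
  rw [Real.dist_eq]
  rcases le_total ‖x‖ ‖y‖ with hxy | hyx
  · exact (hD x y (norm_pos_iff.1 hx) hxy).trans_lt hxε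
  · rw [abs_sub_comm]
    exact (hD y x (norm_pos_iff.1 hy) hyx).trans_lt hyε

lemma exists_norm_gradient_le_div_norm (hn : 1 < finrank ℝ E) (hp : 1 < p) (hq : p - 1 < q) :
    ∃ K > 0, ∀ u : E → ℝ, (∀ x ≠ 0, SolvesAt p q u x) → (∀ x ≠ 0, 0 < u x) →
      ∀ x ≠ 0, ‖∇ u x‖ ≤ K * (u x / ‖x‖) := by
  obtain ⟨K, hK, hbound⟩ := exists_norm_gradient_le_div (E := E) hn hp hq
  refine ⟨2 * K, by positivity, fun u hu hpos x hx => ?_⟩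
  have : 0 < ‖x‖ := norm_pos_iff.2 hx
  refine (hbound u x (‖x‖ / 2) (by positivity) (fun y hy => ?_)
    fun y hy => hpos y (ne_zero_of_mem_closedBall_half_norm hx hy)).trans_eq (by field_simp)
  filter_upwards [isOpen_ne.mem_nhds (ne_zero_of_mem_closedBall_half_norm hx hy)] using hu

lemma exists_norm_gradient_le_norm_rpow (hn : 1 < finrank ℝ E) (hp : 1 < p) (hq : p - 1 < q) :
    ∃ K > 0, ∀ u : E → ℝ, (∀ x ≠ 0, SolvesAt p q u x) → (∀ x ≠ 0, 0 ≤ u x) →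
      ∀ x ≠ 0, ‖∇ u x‖ ≤ K * ‖x‖ ^ (-(1 / (q + 1 - p))) := by
  obtain ⟨K, hK, hbound⟩ := exists_norm_gradient_le_rpow (E := E) hn hp hq
  refine ⟨K * (1 / 2) ^ (-(1 / (q + 1 - p))), by positivity, fun u hu hpos x hx => ?_⟩
  have hxpos : 0 < ‖x‖ := norm_pos_iff.2 hx
  have := hbound (fun y => u y + 1) x (‖x‖ / 2) (by positivity) (fun y hy => by
    filter_upwards [isOpen_ne.mem_nhds (ne_zero_of_mem_closedBall_half_norm hx hy)] with z hz
    exact (hu z hz).add_const 1)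
    fun y hy => by linarith [hpos y (ne_zero_of_mem_closedBall_half_norm hx hy)]
  rwa [gradient_add_const, div_eq_mul_one_div, Real.mul_rpow hxpos.le (by norm_num),
    mul_comm (‖x‖ ^ _), ← mul_assoc] at this

theorem exists_harnack (hn : 1 < finrank ℝ E) (hp : 1 < p) (hq : p - 1 < q) :
    ∃ C > 0, ∀ u : E → ℝ, (∀ x ≠ 0, SolvesAt p q u x) → (∀ x ≠ 0, 0 < u x) →
      ∀ x y : E, x ≠ 0 → ‖x‖ = ‖y‖ → u x ≤ C * u y := by
  obtain ⟨K, hK, hbound⟩ := exists_norm_gradient_le_div_norm (E := E) hn hp hq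
  refine ⟨Real.exp (8 * K), Real.exp_pos _, fun u hu hpos x y hx hxy => ?_⟩
  have hxpos : 0 < ‖x‖ := norm_pos_iff.2 hx
  have hne (z : E) (hz : ‖x‖ / 2 ≤ ‖z‖) : z ≠ 0 := norm_pos_iff.1 (by linarith)
  have hlog (z : E) (hz : z ≠ 0) :
      HasFDerivAt (fun y => Real.log (u y)) ((u z)⁻¹ • fderiv ℝ u z) z :=
    (hu z hz).regularAt.differentiableAt.hasFDerivAt.log (hpos z hz).ne'
  have hosc := abs_sub_le_of_norm_eq (f := fun y => Real.log (u y)) (B := K / (‖x‖ / 2)) hn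
    (fun z hz => (hlog z (hne z hz)).differentiableAt) (fun z hz => ?_) rfl hxy.symm
  · rw [show 4 * (K / (‖x‖ / 2)) * ‖x‖ = 8 * K by field_simp; norm_num] at hosc
    have hy : y ≠ 0 := norm_pos_iff.1 (hxy ▸ hxpos)
    rw [← Real.exp_log (hpos x hx), ← Real.exp_log (hpos y hy), ← Real.exp_add]
    exact Real.exp_le_exp.2 (by linarith [(abs_le.1 hosc).2])
  · have hz₀ := hne z hz
    have huz := hpos z hz₀
    rw [norm_gradient, (hlog z hz₀).fderiv, norm_smul, ← norm_gradient, norm_inv,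
      Real.norm_of_nonneg huz.le, inv_mul_le_iff₀ huz]
    calc ‖∇ u z‖ ≤ K * (u z / ‖z‖) := hbound u hu hpos z hz₀
      _ ≤ K * (u z / (‖x‖ / 2)) := by gcongr
      _ = u z * (K / (‖x‖ / 2)) := by ring

end PuncturedSpace

section RemovableSingularity

variable {E : Type*} [NormedAddCommGroup E] [InnerProductSpace ℝ E] [FiniteDimensional ℝ E]
  {p q r s R B m M : ℝ} {u : E → ℝ} {x : E}

lemma le_fundamentalSolution_on_annulus (hp : 1 < p) (hpn : p < finrank ℝ E)
    (hu : ∀ x ≠ 0, SolvesAt p q u x) (hr : 0 < r) (hB : 0 < B)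
    (hin : ∀ x, ‖x‖ = r → u x ≤ B + m) (hout : ∀ x, ‖x‖ = R → u x ≤ m) (hrx : r ≤ ‖x‖)
    (hxR : ‖x‖ ≤ R) :
    u x ≤ B * r ^ ((finrank ℝ E - p) / (p - 1)) * ‖x‖ ^ (-((finrank ℝ E - p) / (p - 1))) + m := by
  set s : ℝ := (finrank ℝ E - p) / (p - 1) with hs
  have hp₁ : 0 < p - 1 := by linarith
  have hs₀ : 0 < s := div_pos (by linarith) hp₁
  have hne (y : E) (hy : r ≤ dist y 0) : y ≠ 0 := dist_pos.1 (hr.trans_le hy)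
  have hharmonic : (finrank ℝ E : ℝ) - 1 + (-s - 1) * (p - 1) = 0 := by
    rw [hs]
    field_simp
    ring
  have hcs : B * r ^ s * -s ≠ 0 := (mul_neg_of_pos_of_neg (by positivity) (neg_lt_zero.2 hs₀)).ne
  have hle := le_radialPower_on_annulus hp.le (z := 0) (R := R) (a := m) hcs hr
    (fun y hy _ => (hu y (hne y hy)).regularAt) (fun y hy => ?_) (fun y hy => ?_)
    (fun y hy _ hgrad => ?_) x (by rwa [dist_zero_right]) (by rwa [dist_zero_right])
  · rwa [radialPower, sub_zero] at hle
  · rw [dist_zero_right] at hy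
    rw [radialPower, sub_zero, hy, mul_assoc, ← Real.rpow_add hr, add_neg_cancel, Real.rpow_zero,
      mul_one]
    exact hin y hy
  · rw [dist_zero_right] at hy
    exact (hout y hy).trans (le_add_of_nonneg_left (by positivity))
  · rw [(hu y (hne y hy.le)).2.2, pLaplacian_radialPower (hne y hy.le), hharmonic, zero_mul,
      mul_zero, hgrad]
    exact Real.rpow_pos_of_pos (norm_pos_iff.2 (gradient_radialPower_ne_zero (hne y hy.le) hcs m)) q

lemma le_of_small_barrier_on_annulus (hp : 1 ≤ p) (hu : ∀ x ≠ 0, SolvesAt p q u x)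
    (hpos : ∀ x ≠ 0, 0 ≤ u x) (hs : 0 < s)
    (hsq : (s + 1) * (q + 1 - p) ≤ 1) (hr : 0 < r) (hm : 0 < m) (hout : ∀ x, ‖x‖ = R → m ≤ u x)
    (hsmall : (m * r ^ s * s) ^ (q + 1 - p) <
      (finrank ℝ E - 1 - (s + 1) * (p - 1)) * R ^ ((s + 1) * (q + 1 - p) - 1))
    (hrx : r ≤ ‖x‖) (hxR : ‖x‖ ≤ R) :
    m - m * r ^ s * ‖x‖ ^ (-s) ≤ u x := by
  have hne (y : E) (hy : r ≤ dist y 0) : y ≠ 0 := dist_pos.1 (hr.trans_le hy)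
  have hcs : m * r ^ s * -s < 0 := mul_neg_of_pos_of_neg (by positivity) (neg_lt_zero.2 hs)
  have habs : |m * r ^ s * -s| = m * r ^ s * s := by rw [abs_of_neg hcs]; ring
  have hκ : 0 < (finrank ℝ E : ℝ) - 1 - (s + 1) * (p - 1) :=
    pos_of_mul_pos_left ((by positivity : 0 ≤ (m * r ^ s * s) ^ (q + 1 - p)).trans_lt hsmall)
      (Real.rpow_nonneg (hr.le.trans (hrx.trans hxR)) _)
  have hle := le_radialPower_on_annulus hp (v := fun y => -u y) (z := 0) (R := R) (a := -m)
    hcs.ne hr (fun y hy _ => (hu y (hne y hy)).regularAt.neg) (fun y hy => ?_) (fun y hy => ?_)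
    (fun y hy hyR hgrad => ?_) x (by rwa [dist_zero_right]) (by rwa [dist_zero_right])
  · rw [radialPower, sub_zero] at hle
    linarith
  · have hy₀ := hne y hy.ge
    rw [dist_zero_right] at hy
    rw [radialPower, sub_zero, hy, mul_assoc, ← Real.rpow_add hr, add_neg_cancel, Real.rpow_zero]
    linarith [hpos y hy₀]
  · rw [dist_zero_right] at hy
    exact (neg_le_neg (hout y hy)).trans (le_add_of_nonneg_left (by positivity))
  · have hy₀ := hne y hy.le
    rw [pLaplacian_neg, (hu y hy₀).2.2, ← norm_neg (∇ u y), ← gradient_neg, hgrad]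
    refine pLaplacian_radialPower_lt
      (κ := finrank ℝ E - 1 - (s + 1) * (p - 1)) hcs.ne (by rw [habs]; ring) hy₀ ?_ (-m)
    rw [dist_zero_right] at hy hyR
    rw [habs, sub_zero, sub_neg_eq_add, add_comm 1 s]
    exact hsmall.trans_le (mul_le_mul_of_nonneg_left
      (Real.rpow_le_rpow_of_nonpos (hr.trans hy) hyR.le (by linarith)) hκ.le)

lemma exists_norm_forall_of_tendsto_cocompact {f : E → ℝ} (hf : Tendsto f (cocompact E) (𝓝 M))
    {P : ℝ → Prop} (hP : ∀ᶠ t in 𝓝 M, P t) : ∃ R, ∀ x : E, R ≤ ‖x‖ → P (f x) := by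
  rw [← cobounded_eq_cocompact] at hf
  obtain ⟨R, -, hR⟩ := hasBasis_cobounded_norm.eventually_iff.1 (hf.eventually hP)
  exact ⟨R, fun x hx => hR hx⟩

lemma le_of_frequently_bounded (hp : 1 < p) (hpn : p < finrank ℝ E)
    (hu : ∀ x ≠ 0, SolvesAt p q u x) (hM : Tendsto u (cocompact E) (𝓝 M))
    (hbdd : ∃ᶠ r in 𝓝[>] (0 : ℝ), ∀ y : E, ‖y‖ = r → u y ≤ B) (hx : x ≠ 0) : u x ≤ M := by
  refine le_of_forall_gt_imp_ge_of_dense fun m hm => ?_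
  obtain ⟨R, hR⟩ := exists_norm_forall_of_tendsto_cocompact hM (eventually_lt_nhds hm)
  set s : ℝ := (finrank ℝ E - p) / (p - 1)
  have hs : 0 < s := div_pos (by linarith) (by linarith)
  have hB : B ≤ max (B - m) 1 + m := by linarith [le_max_left (B - m) 1]
  have hlim : Tendsto (fun r : ℝ => max (B - m) 1 * r ^ s * ‖x‖ ^ (-s) + m) (𝓝[>] 0) (𝓝 m) := by
    simpa using
      (((tendsto_rpow_nhdsGT_zero hs).const_mul (max (B - m) 1)).mul_const (‖x‖ ^ (-s))).add_const m
  have hsmall : ∀ᶠ r in 𝓝[>] (0 : ℝ), r ≤ ‖x‖ :=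
    nhdsWithin_le_nhds (eventually_le_nhds (norm_pos_iff.2 hx))
  refine ge_of_tendsto_of_frequently hlim
    ((hbdd.and_eventually (hsmall.and self_mem_nhdsWithin)).mono ?_)
  rintro r ⟨hin, hrx, hr⟩
  exact le_fundamentalSolution_on_annulus hp hpn hu hr (by positivity)
    (fun y hy => (hin y hy).trans hB) (R := max R ‖x‖)
    (fun y hy => (hR y (hy ▸ le_max_left _ _)).le) hrx (le_max_right _ _)

lemma exists_small_barrier_exponent {n : ℝ} (hp : 1 < p) (hpn : p < n) (hq : p - 1 < q)
    (hqp : q < p) : ∃ s > 0, (s + 1) * (q + 1 - p) ≤ 1 ∧ 0 < n - 1 - (s + 1) * (p - 1) := by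
  have hp₁ : 0 < p - 1 := by linarith
  have hq₁ : 0 < q + 1 - p := by linarith
  refine ⟨min ((n - p) / (p - 1) / 2) ((p - q) / (q + 1 - p)),
    lt_min (half_pos (div_pos (by linarith) hp₁)) (div_pos (by linarith) hq₁), ?_, ?_⟩
  · have hle := (le_div_iff₀ hq₁).1 (min_le_right ((n - p) / (p - 1) / 2) ((p - q) / (q + 1 - p)))
    linarith
  · have hle := min_le_left ((n - p) / (p - 1) / 2) ((p - q) / (q + 1 - p))
    rw [div_right_comm, le_div_iff₀ hp₁] at hle
    rw [div_right_comm]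
    linarith

lemma limit_le_of_nonneg (hp : 1 < p) (hpn : p < finrank ℝ E) (hq : p - 1 < q) (hqp : q < p)
    (hu : ∀ x ≠ 0, SolvesAt p q u x) (hpos : ∀ x ≠ 0, 0 ≤ u x)
    (hM : Tendsto u (cocompact E) (𝓝 M)) (hx : x ≠ 0) : M ≤ u x := by
  refine le_of_forall_lt_imp_le_of_dense fun m hm => ?_
  rcases le_or_gt m 0 with hm₀ | hm₀
  · exact hm₀.trans (hpos x hx)
  obtain ⟨R₀, hR₀⟩ := exists_norm_forall_of_tendsto_cocompact hM (eventually_gt_nhds hm)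
  obtain ⟨s, hs, hsq, hκ⟩ := exists_small_barrier_exponent hp hpn hq hqp
  have hxpos : 0 < ‖x‖ := norm_pos_iff.2 hx
  set R := max R₀ ‖x‖
  have : 0 < R := hxpos.trans_le (le_max_right _ _)
  have hrpow := (tendsto_rpow_nhdsGT_zero hs).const_mul m
  have hsmall : ∀ᶠ r in 𝓝[>] (0 : ℝ), (m * r ^ s * s) ^ (q + 1 - p) <
      (finrank ℝ E - 1 - (s + 1) * (p - 1)) * R ^ ((s + 1) * (q + 1 - p) - 1) := by
    have hτ : 0 < q + 1 - p := by linarith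
    have hlim := (hrpow.mul_const s).rpow_const (p := q + 1 - p) (Or.inr hτ.le)
    rw [mul_zero, zero_mul, Real.zero_rpow hτ.ne'] at hlim
    exact hlim.eventually_lt_const (by positivity)
  have hlim : Tendsto (fun r : ℝ => m - m * r ^ s * ‖x‖ ^ (-s)) (𝓝[>] 0) (𝓝 m) := by
    simpa using (hrpow.mul_const (‖x‖ ^ (-s))).const_sub m
  refine le_of_tendsto hlim ?_
  filter_upwards [hsmall, self_mem_nhdsWithin, nhdsWithin_le_nhds (eventually_le_nhds hxpos)]
    with r hrsmall hr hrx
  exact le_of_small_barrier_on_annulus hp.le hu hpos hs hsq hr hm₀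
    (fun y hy => (hR₀ y (hy ▸ le_max_left _ _)).le) hrsmall hrx (le_max_right _ _)

lemma exists_frequently_bounded (hn : 1 < finrank ℝ E) (hp : 1 < p) (hq : p - 1 < q)
    (hu : ∀ x ≠ 0, SolvesAt p q u x) (hpos : ∀ x ≠ 0, 0 ≤ u x) (h : ¬Tendsto u (𝓝[≠] 0) atTop) :
    ∃ B, ∃ᶠ r in 𝓝[>] (0 : ℝ), ∀ y : E, ‖y‖ = r → u y ≤ B := by
  obtain ⟨C, hC, hharnack⟩ := exists_harnack (E := E) hn hp hq
  simp only [Filter.tendsto_atTop, not_forall, not_eventually, not_le] at h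
  obtain ⟨B, hB⟩ := h
  refine ⟨C * (B + 1), ?_⟩
  rw [frequently_nhdsWithin_iff] at hB ⊢
  refine (continuous_norm.tendsto' (0 : E) 0 norm_zero).frequently (hB.mono ?_)
  rintro y ⟨hy, hy₀ : y ≠ 0⟩
  refine ⟨fun z hz => ?_, norm_pos_iff.2 hy₀⟩
  have hz₀ : z ≠ 0 := norm_pos_iff.1 (hz ▸ norm_pos_iff.2 hy₀)
  calc u z ≤ u z + 1 := le_add_of_nonneg_right zero_le_one
    _ ≤ C * (u y + 1) := hharnack (fun x => u x + 1) (fun x hx => (hu x hx).add_const 1)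
        (fun x hx => by linarith [hpos x hx]) z y hz₀ hz
    _ ≤ C * (B + 1) := by gcongr

theorem tendsto_atTop_or_forall_eq (hn : 1 < finrank ℝ E) (hp : 1 < p) (hpn : p < finrank ℝ E)
    (hq : p - 1 < q) (hqp : q < p) (hu : ∀ x ≠ 0, SolvesAt p q u x) (hpos : ∀ x ≠ 0, 0 ≤ u x)
    (hM : Tendsto u (cocompact E) (𝓝 M)) :
    Tendsto u (𝓝[≠] 0) atTop ∨ ∀ x ≠ 0, u x = M := by
  refine or_iff_not_imp_left.2 fun h x hx => ?_
  obtain ⟨B, hB⟩ := exists_frequently_bounded hn hp hq hu hpos h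
  exact le_antisymm (le_of_frequently_bounded hp hpn hu hM hB hx)
    (limit_le_of_nonneg hp hpn hq hqp hu hpos hM hx)

end RemovableSingularity

section Symmetry

lemma isCompact_superlevel_diff_singleton {X : Type*} [TopologicalSpace X] {F : X → ℝ} {H : Set X}
    {z : X} {c : ℝ} (hH : IsClosed H) (hF : ∀ y ∈ H, y ≠ z → ContinuousAt F y)
    (hz : ∀ᶠ y in 𝓝[≠] z, F y < c) (hinf : ∀ᶠ y in cocompact X, F y < c) :
    IsCompact {y ∈ H \ {z} | c ≤ F y} := by
  obtain ⟨t, ht, hts⟩ := mem_cocompact.1 hinf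
  refine ht.of_isClosed_subset (isClosed_of_closure_subset fun y hy => ?_)
    fun y hy => by_contra fun hyt => (hts hyt).not_ge hy.2
  have hyH : y ∈ H := closure_minimal (fun x hx => hx.1.1) hH hy
  have hfreq := mem_closure_iff_frequently.1 hy
  have hyz : y ≠ z := by
    rintro rfl
    obtain ⟨x, hx, hxc⟩ := (hfreq.and_eventually (eventually_nhdsWithin_iff.1 hz)).exists
    exact (hxc hx.1.2).not_ge hx.2
  exact ⟨⟨hyH, hyz⟩, ge_of_tendsto_of_frequently (hF y hyH hyz) (hfreq.mono fun x hx => hx.2)⟩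

variable {E : Type*} [NormedAddCommGroup E] [InnerProductSpace ℝ E] {p q μ ε M : ℝ} {u v : E → ℝ}
  {e x y : E}

/-- The reflection across the hyperplane `⟪e, y⟫ = μ ‖e‖² / 2`; it exchanges `0` and `μ • e`. -/
noncomputable def planeReflection (e : E) (μ : ℝ) (y : E) : E := (ℝ ∙ e)ᗮ.reflection y + μ • e

lemma continuous_planeReflection : Continuous (planeReflection e μ) :=
  ((ℝ ∙ e)ᗮ.reflection.continuous).add continuous_const

lemma tendsto_planeReflection_cocompact :
    Tendsto (planeReflection e μ) (cocompact E) (cocompact E) :=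
  ((ℝ ∙ e)ᗮ.reflection.toHomeomorph.trans
    (Homeomorph.addRight (μ • e))).isClosedEmbedding.tendsto_cocompact

lemma planeReflection_involutive : Function.Involutive (planeReflection e μ) := by
  intro y
  simp only [planeReflection, map_add, map_smul, Submodule.reflection_reflection,
    Submodule.reflection_orthogonalComplement_singleton_eq_neg]
  module

lemma planeReflection_eq_zero_iff : planeReflection e μ y = 0 ↔ y = μ • e := by
  rw [planeReflection_involutive.eq_iff]
  simp [planeReflection]

lemma planeReflection_eq_self (he : e ≠ 0) (hy : ⟪e, y⟫ = μ * ‖e‖ ^ 2 / 2) :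
    planeReflection e μ y = y := by
  have : ‖e‖ ^ 2 ≠ 0 := by positivity
  rw [planeReflection, Submodule.reflection_orthogonal_apply, Submodule.reflection_singleton_apply,
    hy, RCLike.ofReal_real_eq_id, id, show μ * ‖e‖ ^ 2 / 2 / ‖e‖ ^ 2 = μ / 2 by field_simp]
  module

lemma ne_zero_of_inner_le (he : e ≠ 0) (hμ : μ < 0) (hy : ⟪e, y⟫ ≤ μ * ‖e‖ ^ 2 / 2) : y ≠ 0 := by
  rintro rfl
  rw [inner_zero_right] at hy
  have : μ * ‖e‖ ^ 2 < 0 := mul_neg_of_neg_of_pos hμ (by positivity)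
  linarith

lemma isCompact_superlevel_sub_reflection (hu : ∀ x ≠ 0, ContinuousAt u x) (hM₀ : 0 ≤ M)
    (hM : Tendsto u (cocompact E) (𝓝 M)) (h0 : Tendsto u (𝓝[≠] 0) atTop) (he : e ≠ 0) (hμ : μ < 0)
    (hε : 0 < ε) {c : ℝ} (hc : 0 < c) :
    IsCompact {y ∈ {y : E | ⟪e, y⟫ ≤ μ * ‖e‖ ^ 2 / 2} \ {μ • e} |
      c ≤ u y - (1 + ε) * u (planeReflection e μ y)} := by
  have hσ : Tendsto (planeReflection e μ) (𝓝[≠] (μ • e)) (𝓝[≠] 0) := by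
    refine tendsto_nhdsWithin_iff.2 ⟨?_, ?_⟩
    · exact (continuous_planeReflection.tendsto' _ _
        (planeReflection_eq_zero_iff.2 rfl)).mono_left nhdsWithin_le_nhds
    · filter_upwards [self_mem_nhdsWithin] with y hy using planeReflection_eq_zero_iff.not.2 hy
  refine isCompact_superlevel_diff_singleton (isClosed_le (by fun_prop) continuous_const)
    (fun y hy hyμ => ?_) ?_ ?_
  · exact (hu y (ne_zero_of_inner_le he hμ hy)).sub (continuousAt_const.mul
      ((hu _ (planeReflection_eq_zero_iff.not.2 hyμ)).comp continuous_planeReflection.continuousAt))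
  · have hblow := (h0.comp hσ).const_mul_atTop (show 0 < 1 + ε by positivity)
    have hμe : μ • e ≠ 0 := smul_ne_zero hμ.ne he
    have hF := ((hu _ hμe).tendsto.mono_left nhdsWithin_le_nhds).add_atBot
      (tendsto_neg_atTop_atBot.comp hblow)
    filter_upwards [hF.eventually_lt_atBot c] with y hy using hy
  · have hlim := hM.sub
      ((hM.comp (tendsto_planeReflection_cocompact (e := e) (μ := μ))).const_mul (1 + ε))
    have : 0 ≤ ε * M := by positivity
    exact hlim.eventually_lt_const (by linarith)

variable [FiniteDimensional ℝ E]

lemma SolvesAt.comp_linearIsometryEquiv_add (L : E ≃ₗᵢ[ℝ] E) {a : E}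
    (h : SolvesAt p q u (L x + a)) : SolvesAt p q (fun y => u (L y + a)) x := by
  have hcont {n : WithTop ℕ∞} : ContDiffAt ℝ n (fun y => L y + a) x :=
    L.toContinuousLinearEquiv.contDiff.contDiffAt.add contDiffAt_const
  have hgrad : ∇ (fun y => u (L y + a)) x = L.symm (∇ u (L x + a)) := by
    rw [gradient_comp_linearIsometryEquiv L (fun y => u (y + a)), gradient_comp_add_right]
  refine ⟨ContDiffAt.comp x h.1 hcont,
    fun h0 => ContDiffAt.comp x (h.2.1 fun hu0 => h0 ?_) hcont, ?_⟩
  · rw [hgrad, hu0, map_zero]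
  · rw [hgrad, pLaplacian_comp_linearIsometryEquiv p L (fun y => u (y + a)),
      pLaplacian_comp_add_right, L.symm.norm_map, h.2.2]

lemma SolvesAt.isSubsolutionOn {Ω : Set E} (h : ∀ x ∈ Ω, SolvesAt p q u x) :
    IsSubsolutionOn p q u Ω :=
  fun x hx => ⟨(h x hx).regularAt, fun _ => (h x hx).2.2.ge⟩

lemma RegularAt.const_mul (h : RegularAt v x) (c : ℝ) : RegularAt (fun y => c * v y) x := by
  refine ⟨contDiffAt_const.mul h.1, fun h0 => contDiffAt_const.mul (h.2 fun hv0 => h0 ?_)⟩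
  rw [gradient_const_mul, hv0, smul_zero]

lemma SolvesAt.isStrictSupersolutionOn_const_mul (hq : p - 1 < q) {a : ℝ} (ha : 1 < a) {Ω : Set E}
    (h : ∀ x ∈ Ω, SolvesAt p q v x) : IsStrictSupersolutionOn p q (fun y => a * v y) Ω := by
  refine fun x hx => ⟨(h x hx).regularAt.const_mul a, fun h0 => ?_⟩
  rw [gradient_const_mul] at h0 ⊢
  have : 0 < ‖∇ v x‖ := norm_pos_iff.2 fun hv0 => h0 (by rw [hv0, smul_zero])
  rw [pLaplacian_const_mul p (by positivity), (h x hx).2.2, norm_smul_of_nonneg (by positivity),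
    Real.mul_rpow (by positivity) (norm_nonneg _)]
  exact mul_lt_mul_of_pos_right (Real.rpow_lt_rpow_of_exponent_lt ha hq) (by positivity)

lemma le_mul_comp_planeReflection [Nontrivial E] (hp : 1 < p) (hq : p - 1 < q)
    (hu : ∀ x ≠ 0, SolvesAt p q u x) (hpos : ∀ x ≠ 0, 0 ≤ u x) (hM₀ : 0 ≤ M)
    (hM : Tendsto u (cocompact E) (𝓝 M)) (h0 : Tendsto u (𝓝[≠] 0) atTop) (he : e ≠ 0)
    (hμ : μ < 0) (hε : 0 < ε) (hx : ⟪e, x⟫ < μ * ‖e‖ ^ 2 / 2) (hxμ : x ≠ μ • e) :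
    u x ≤ (1 + ε) * u (planeReflection e μ x) := by
  set Ω : Set E := {y | ⟪e, y⟫ < μ * ‖e‖ ^ 2 / 2} \ {μ • e}
  have hΩ_open : IsOpen Ω :=
    (isOpen_lt (by fun_prop) continuous_const).sdiff isClosed_singleton
  refine le_of_forall_pos_le_add fun c hc => ?_
  have hK := isCompact_superlevel_sub_reflection (fun y hy => (hu y hy).1.continuousAt) hM₀ hM h0
    he hμ hε hc
  refine sub_le_iff_le_add'.1 (sub_le_of_forall_sub_le_off_compact hp hq hΩ_open hK ?_
    (SolvesAt.isSubsolutionOn fun y hy => hu y (ne_zero_of_inner_le he hμ (le_of_lt hy.1)))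
    (SolvesAt.isStrictSupersolutionOn_const_mul hq (lt_add_of_pos_right 1 hε) fun y hy =>
      (hu _ (planeReflection_eq_zero_iff.not.2 hy.2)).comp_linearIsometryEquiv_add _)
    (fun y hy => ?_) x ⟨hx, hxμ⟩)
  · rintro y ⟨⟨hy, hyμ⟩, hyc⟩
    have hy : ⟪e, y⟫ ≤ μ * ‖e‖ ^ 2 / 2 := hy
    refine ⟨show ⟪e, y⟫ < μ * ‖e‖ ^ 2 / 2 from lt_of_le_of_ne hy fun heq => ?_, hyμ⟩
    rw [planeReflection_eq_self he heq] at hyc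
    have := mul_nonneg hε.le (hpos y (ne_zero_of_inner_le he hμ hy))
    linarith
  · by_contra! h
    exact hy.2 ⟨⟨le_of_lt (show ⟪e, y⟫ < μ * ‖e‖ ^ 2 / 2 from hy.1.1), hy.1.2⟩, h.le⟩

lemma le_of_norm_eq_of_tendsto_atTop [Nontrivial E] (hp : 1 < p) (hq : p - 1 < q)
    (hu : ∀ x ≠ 0, SolvesAt p q u x) (hpos : ∀ x ≠ 0, 0 ≤ u x) (hM₀ : 0 ≤ M)
    (hM : Tendsto u (cocompact E) (𝓝 M)) (h0 : Tendsto u (𝓝[≠] 0) atTop) (hne : x ≠ y)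
    (hxy : ‖x‖ = ‖y‖) : u x ≤ u y := by
  set e := y - x with he
  have he₀ : e ≠ 0 := sub_ne_zero.2 hne.symm
  have hy : y ≠ 0 := by
    rintro rfl
    exact hne (norm_eq_zero.1 (hxy.trans norm_zero))
  have hx : x ≠ 0 := norm_pos_iff.1 (hxy ▸ norm_pos_iff.2 hy)
  have hreflect : (ℝ ∙ e)ᗮ.reflection x = y := by
    rw [← Submodule.reflection_sub hxy.symm, Submodule.reflection_reflection]
  have hinner : ⟪e, x⟫ < 0 := by
    have hsq : ‖e‖ ^ 2 = ‖y‖ ^ 2 - 2 * ⟪y, x⟫ + ‖x‖ ^ 2 := norm_sub_sq_real y x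
    have : 0 < ‖e‖ ^ 2 := by positivity
    rw [he, inner_sub_left, real_inner_self_eq_norm_sq]
    rw [← hxy] at hsq
    linarith
  have hσ : Tendsto (fun t : ℝ => planeReflection e (-t) x) (𝓝[>] 0) (𝓝 y) := by
    have hcont : Continuous fun t : ℝ => planeReflection e (-t) x := by
      unfold planeReflection
      fun_prop
    exact (hcont.tendsto' 0 y (by simp [planeReflection, hreflect])).mono_left nhdsWithin_le_nhds
  have hlim := (((continuous_const_add (1 : ℝ)).tendsto 0).mono_left nhdsWithin_le_nhds).mul
    ((hu y hy).1.continuousAt.tendsto.comp hσ)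
  rw [add_zero, one_mul] at hlim
  have hplane : ∀ᶠ t in 𝓝 (0 : ℝ), ⟪e, x⟫ < -t * ‖e‖ ^ 2 / 2 := by
    have hcont : Continuous fun t : ℝ => -t * ‖e‖ ^ 2 / 2 := by fun_prop
    exact (hcont.tendsto 0).eventually_const_lt (by simpa using hinner)
  have hcenter : ∀ᶠ t in 𝓝 (0 : ℝ), -t • e ≠ x :=
    ContinuousAt.eventually_ne (by fun_prop) (by simpa using hx.symm)
  refine ge_of_tendsto hlim ?_
  filter_upwards [nhdsWithin_le_nhds hplane, nhdsWithin_le_nhds hcenter, self_mem_nhdsWithin]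
    with t htplane htcenter ht
  exact le_mul_comp_planeReflection hp hq hu hpos hM₀ hM h0 he₀ (neg_lt_zero.2 ht) ht htplane
    htcenter.symm

theorem eq_of_norm_eq_of_tendsto_atTop [Nontrivial E] (hp : 1 < p) (hq : p - 1 < q)
    (hu : ∀ x ≠ 0, SolvesAt p q u x) (hpos : ∀ x ≠ 0, 0 ≤ u x) (hM₀ : 0 ≤ M)
    (hM : Tendsto u (cocompact E) (𝓝 M)) (h0 : Tendsto u (𝓝[≠] 0) atTop) (hxy : ‖x‖ = ‖y‖) :
    u x = u y := by
  rcases eq_or_ne x y with rfl | hne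
  · rfl
  · exact le_antisymm (le_of_norm_eq_of_tendsto_atTop hp hq hu hpos hM₀ hM h0 hne hxy)
      (le_of_norm_eq_of_tendsto_atTop hp hq hu hpos hM₀ hM h0 hne.symm hxy.symm)

end Symmetry

section ProfileODE

variable {σ κ a b r : ℝ} {f g Y Z : ℝ → ℝ}

lemma eq_of_hasDerivAt_zero_Ioi {x y : ℝ} (h : ∀ t > a, HasDerivAt g 0 t) (hx : a < x)
    (hy : a < y) : g x = g y :=
  isOpen_Ioi.is_const_of_deriv_eq_zero isPreconnected_Ioi
    (fun t ht => (h t ht).differentiableAt.differentiableWithinAt) (fun t ht => (h t ht).deriv)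
    hx hy

lemma eq_of_hasDerivAt_eq_of_tendsto {f' : ℝ → ℝ} {M : ℝ} (hf : ∀ t > a, HasDerivAt f (f' t) t)
    (hg : ∀ t > a, HasDerivAt g (f' t) t) (hfM : Tendsto f atTop (𝓝 M))
    (hgM : Tendsto g atTop (𝓝 M)) (hr : a < r) : f r = g r := by
  have hconst : ∀ᶠ t in atTop, f r - g r = f t - g t := by
    filter_upwards [eventually_gt_atTop a] with t ht
    exact eq_of_hasDerivAt_zero_Ioi (g := fun t => f t - g t)
      (fun t ht => ((hf t ht).fun_sub (hg t ht)).congr_deriv (sub_self _)) hr ht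
  exact sub_eq_zero.1 (tendsto_nhds_unique (tendsto_const_nhds.congr' hconst)
    (by simpa using hfM.sub hgM))

lemma hasDerivAt_rpow_neg_add {s : ℝ} (hκ : κ ≠ 0) (hr : 0 < r) (hZ : 0 < Z r)
    (h : HasDerivAt Z (s * (r ^ (κ - 1) * Z r ^ (1 + σ))) r) :
    HasDerivAt (fun t => Z t ^ (-σ) + s * (σ / κ * t ^ κ)) 0 r := by
  have hderiv := (h.rpow_const (p := -σ) (Or.inl hZ.ne')).fun_add
    (((Real.hasDerivAt_rpow_const (p := κ) (Or.inl hr.ne')).const_mul (σ / κ)).const_mul s)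
  have hZσ : Z r ^ (1 + σ) * Z r ^ (-σ - 1) = 1 := by
    rw [← Real.rpow_add hZ, show 1 + σ + (-σ - 1) = 0 by ring, Real.rpow_zero]
  refine hderiv.congr_deriv ?_
  linear_combination (-s * σ * r ^ (κ - 1)) * hZσ + s * r ^ (κ - 1) * div_mul_cancel₀ σ hκ

lemma monotoneOn_of_hasDerivAt_mul_abs_rpow
    (hY : ∀ r > 0, HasDerivAt Y (r ^ (κ - 1) * |Y r| ^ (1 + σ)) r) : MonotoneOn Y (Ioi 0) := by
  refine monotoneOn_of_deriv_nonneg (convex_Ioi 0)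
    (fun t ht => (hY t ht).continuousAt.continuousWithinAt)
    (fun t ht => (hY t (interior_subset ht)).differentiableAt.differentiableWithinAt)
    fun t ht => ?_
  have ht : 0 < t := interior_subset ht
  rw [(hY t ht).deriv]
  positivity

lemma nonpos_of_hasDerivAt_mul_abs_rpow (hσ : 0 < σ) (hκ : 0 < κ)
    (hY : ∀ r > 0, HasDerivAt Y (r ^ (κ - 1) * |Y r| ^ (1 + σ)) r) (hr : 0 < r) : Y r ≤ 0 := by
  by_contra! hYr
  have hpos (t : ℝ) (ht : r < t) : 0 < Y t :=
    hYr.trans_le (monotoneOn_of_hasDerivAt_mul_abs_rpow hY hr (hr.trans ht) ht.le)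
  have hderiv (t : ℝ) (ht : r < t) :
      HasDerivAt (fun t => Y t ^ (-σ) + 1 * (σ / κ * t ^ κ)) 0 t := by
    refine hasDerivAt_rpow_neg_add hκ.ne' (hr.trans ht) (hpos t ht) ?_
    simpa only [one_mul, abs_of_pos (hpos t ht)] using hY t (hr.trans ht)
  have hlim : Tendsto (fun t : ℝ => σ / κ * t ^ κ) atTop atTop :=
    (tendsto_rpow_atTop hκ).const_mul_atTop (by positivity)
  obtain ⟨t, htlarge, ht⟩ := ((hlim.eventually_gt_atTop
    (Y (r + 1) ^ (-σ) + σ / κ * (r + 1) ^ κ)).and (eventually_gt_atTop r)).exists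
  have hconst := eq_of_hasDerivAt_zero_Ioi hderiv ht (lt_add_one r)
  have := Real.rpow_pos_of_pos (hpos t ht) (-σ)
  simp only [one_mul] at hconst
  linarith

lemma eq_zero_of_hasDerivAt_mul_abs_rpow (hσ : 0 < σ)
    (hY : ∀ r > 0, HasDerivAt Y (r ^ (κ - 1) * |Y r| ^ (1 + σ)) r) (ha : 0 < a) (hab : a ≤ b)
    (hb : Y b = 0) : Y a = 0 := by
  have hpos (t : ℝ) (ht : t ∈ Icc a b) : 0 < t := ha.trans_le ht.1
  have hYcont : ContinuousOn Y (Icc a b) :=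
    fun t ht => (hY t (hpos t ht)).continuousAt.continuousWithinAt
  obtain ⟨L, hL⟩ := isCompact_Icc.exists_bound_of_continuousOn
    ((continuousOn_id.rpow_const fun t ht => Or.inl (hpos t ht).ne').mul
      (hYcont.abs.rpow_const fun t _ => Or.inr hσ.le) :
      ContinuousOn (fun t => t ^ (κ - 1) * |Y t| ^ σ) (Icc a b))
  have hmem (t : ℝ) (ht : t ∈ Icc 0 (b - a)) : b - t ∈ Icc a b :=
    ⟨by linarith [ht.2], by linarith [ht.1]⟩
  have hderiv (t : ℝ) (ht : t ∈ Icc 0 (b - a)) := (hY _ (hpos _ (hmem t ht))).comp_const_sub b t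
  have hzero := eq_zero_of_abs_deriv_le_mul_abs_self_of_eq_zero_right (K := L)
    (fun t ht => (hderiv t ht).continuousAt.continuousWithinAt)
    (fun t ht => (hderiv t (Ico_subset_Icc_self ht)).hasDerivWithinAt) (by simpa using hb)
    (fun t ht => ?_) (b - a) (right_mem_Icc.2 (sub_nonneg.2 hab))
  · simpa using hzero
  · have hLt : ‖(b - t) ^ (κ - 1) * |Y (b - t)| ^ σ‖ ≤ L :=
      hL _ (hmem t (Ico_subset_Icc_self ht))
    rw [norm_neg, add_comm 1 σ, Real.rpow_add_one' (abs_nonneg _) (by positivity), ← mul_assoc,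
      norm_mul, Real.norm_eq_abs |Y (b - t)|, abs_abs]
    exact mul_le_mul_of_nonneg_right hLt (abs_nonneg _)

lemma rpow_neg_eq_of_hasDerivAt_mul_abs_rpow (hκ : 0 < κ)
    (hY : ∀ r > 0, HasDerivAt Y (r ^ (κ - 1) * |Y r| ^ (1 + σ)) r) (hneg : ∀ r > 0, Y r < 0) :
    ∃ C ≥ 0, ∀ r > 0, (-Y r) ^ (-σ) = C + σ / κ * r ^ κ := by
  have hderiv (t : ℝ) (ht : 0 < t) :
      HasDerivAt (fun t => (-Y t) ^ (-σ) + -1 * (σ / κ * t ^ κ)) 0 t := by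
    refine hasDerivAt_rpow_neg_add hκ.ne' ht (neg_pos.2 (hneg t ht)) ?_
    simpa only [neg_one_mul, abs_of_neg (hneg t ht)] using (hY t ht).fun_neg
  obtain ⟨C, hC⟩ : ∃ C, ∀ r > 0, (-Y r) ^ (-σ) = C + σ / κ * r ^ κ :=
    ⟨_, fun r hr => eq_add_of_sub_eq (by
      simpa only [neg_one_mul, ← sub_eq_add_neg] using
        eq_of_hasDerivAt_zero_Ioi hderiv hr one_pos)⟩
  refine ⟨C, ?_, hC⟩
  have hlim : Tendsto (fun r : ℝ => C + σ / κ * r ^ κ) (𝓝[>] 0) (𝓝 C) := by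
    simpa using ((tendsto_rpow_nhdsGT_zero hκ).const_mul (σ / κ)).const_add C
  refine ge_of_tendsto hlim ?_
  filter_upwards [self_mem_nhdsWithin] with r hr
  rw [← hC r hr]
  exact Real.rpow_nonneg (neg_pos.2 (hneg r hr)).le _

theorem eq_zero_or_rpow_neg_eq_of_hasDerivAt_mul_abs_rpow (hσ : 0 < σ) (hκ : 0 < κ)
    (hY : ∀ r > 0, HasDerivAt Y (r ^ (κ - 1) * |Y r| ^ (1 + σ)) r) :
    (∀ r > 0, Y r = 0) ∨
      (∀ r > 0, Y r < 0) ∧ ∃ C ≥ 0, ∀ r > 0, (-Y r) ^ (-σ) = C + σ / κ * r ^ κ := by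
  have hnonpos (r : ℝ) (hr : 0 < r) : Y r ≤ 0 := nonpos_of_hasDerivAt_mul_abs_rpow hσ hκ hY hr
  by_cases hzero : ∃ b > 0, Y b = 0
  · obtain ⟨b, hb, hYb⟩ := hzero
    refine Or.inl fun r hr => ?_
    rcases le_total r b with hrb | hbr
    · exact eq_zero_of_hasDerivAt_mul_abs_rpow hσ hY hr hrb hYb
    · exact (hnonpos r hr).antisymm
        (hYb ▸ monotoneOn_of_hasDerivAt_mul_abs_rpow hY hb (hb.trans_le hbr) hbr)
  · have hneg (r : ℝ) (hr : 0 < r) : Y r < 0 :=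
      (hnonpos r hr).lt_of_ne fun h => hzero ⟨r, hr, h⟩
    exact Or.inr ⟨hneg, rpow_neg_eq_of_hasDerivAt_mul_abs_rpow hκ hY hneg⟩

end ProfileODE

section Radial

variable {E : Type*} [NormedAddCommGroup E] [InnerProductSpace ℝ E] {p q M : ℝ} {f D W : ℝ → ℝ}
  {x : E}

lemma hasFDerivAt_norm (hx : x ≠ 0) :
    HasFDerivAt (fun y : E => ‖y‖) (‖x‖⁻¹ • innerSL ℝ x) x := by
  have h := hasFDerivAt_norm_rpow_of_ne_zero (hasFDerivAt_id x) hx 1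
  simp only [Real.rpow_one] at h
  refine h.congr_fderiv ?_
  ext v
  simp
  norm_num [Real.rpow_neg_one]

lemma differentiableAt_of_comp_norm (hx : x ≠ 0) (h : DifferentiableAt ℝ (fun y : E => f ‖y‖) x) :
    DifferentiableAt ℝ f ‖x‖ := by
  have hxpos : 0 < ‖x‖ := norm_pos_iff.2 hx
  have hunit : ‖‖x‖⁻¹ • x‖ = 1 := by
    rw [norm_smul, norm_inv, norm_norm, inv_mul_cancel₀ hxpos.ne']
  have hline : DifferentiableAt ℝ (fun t : ℝ => t • ‖x‖⁻¹ • x) ‖x‖ := by fun_prop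
  have h' : DifferentiableAt ℝ (fun y : E => f ‖y‖) (‖x‖ • ‖x‖⁻¹ • x) := by
    rwa [smul_inv_smul₀ hxpos.ne']
  refine (DifferentiableAt.fun_comp' ‖x‖ h' hline).congr_of_eventuallyEq ?_
  filter_upwards [lt_mem_nhds hxpos] with t ht
  rw [norm_smul_of_nonneg ht.le, hunit, mul_one]

lemma differentiableAt_of_radial_smul (hx : x ≠ 0)
    (h : DifferentiableAt ℝ (fun y : E => (W ‖y‖ / ‖y‖) • y) x) : DifferentiableAt ℝ W ‖x‖ := by
  have hquot : DifferentiableAt ℝ (fun y : E => ⟪(W ‖y‖ / ‖y‖) • y, y⟫ * ‖y‖⁻¹) x :=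
    (h.inner ℝ differentiableAt_fun_id).fun_mul ((differentiableAt_fun_id.norm ℝ hx).fun_inv
      (norm_ne_zero_iff.2 hx))
  refine differentiableAt_of_comp_norm hx (hquot.congr_of_eventuallyEq ?_)
  filter_upwards [isOpen_ne.mem_nhds hx] with y hy
  have : ‖y‖ ≠ 0 := norm_ne_zero_iff.2 hy
  simp only [real_inner_smul_left, real_inner_self_eq_norm_sq]
  field_simp

lemma tendsto_of_comp_norm [Nontrivial E] (h : Tendsto (fun y : E => f ‖y‖) (cocompact E) (𝓝 M)) :
    Tendsto f atTop (𝓝 M) := by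
  obtain ⟨e, he⟩ := exists_norm_eq E zero_le_one
  have hline : ∀ᶠ r : ℝ in atTop, ‖r • e‖ = r := by
    filter_upwards [eventually_ge_atTop 0] with r hr
    rw [norm_smul_of_nonneg hr, he, mul_one]
  have hcocompact : Tendsto (fun r : ℝ => r • e) atTop (cocompact E) := by
    refine (tendsto_norm_atTop_iff_cobounded.1 ?_).mono_right Metric.cobounded_le_cocompact
    exact tendsto_id.congr' (hline.mono fun r hr => hr.symm)
  exact (h.comp hcocompact).congr' (hline.mono fun r hr => congrArg f hr)

variable [FiniteDimensional ℝ E]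

lemma gradient_comp_norm {f' : ℝ} (hx : x ≠ 0) (hf : HasDerivAt f f' ‖x‖) :
    ∇ (fun y : E => f ‖y‖) x = (f' / ‖x‖) • x := by
  refine HasGradientAt.gradient (hasGradientAt_iff_hasFDerivAt.2 ?_)
  refine (hf.comp_hasFDerivAt x (hasFDerivAt_norm hx)).congr_fderiv ?_
  ext v
  simp
  ring

lemma traceCLM_fderiv_radial {W' : ℝ} (hx : x ≠ 0) (hW : HasDerivAt W W' ‖x‖) :
    traceCLM (fderiv ℝ (fun y : E => (W ‖y‖ / ‖y‖) • y) x) =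
      W' + (finrank ℝ E - 1) / ‖x‖ * W ‖x‖ := by
  have hxpos : 0 < ‖x‖ := norm_pos_iff.2 hx
  have hderiv : HasFDerivAt (fun y : E => (W ‖y‖ / ‖y‖) • y)
      ((W ‖x‖ / ‖x‖) • ContinuousLinearMap.id ℝ E +
        ((W' * ‖x‖ - W ‖x‖) / ‖x‖ ^ 3) • rankOne ℝ x x) x := by
    refine (((hW.fun_div (hasDerivAt_id' _) hxpos.ne').comp_hasFDerivAt x
      (hasFDerivAt_norm hx)).fun_smul (hasFDerivAt_id x)).congr_fderiv ?_
    ext1 v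
    simp only [Function.comp, id, add_apply, smul_apply, ContinuousLinearMap.smulRight_apply,
      innerSL_apply_apply, InnerProductSpace.rankOne_apply, smul_smul, smul_eq_mul]
    congr 2
    field_simp
  rw [hderiv.fderiv, map_add, map_smul, map_smul, traceCLM_id, traceCLM_rankOne,
    real_inner_self_eq_norm_sq, smul_eq_mul, smul_eq_mul]
  field_simp
  ring

lemma hasDerivAt_flux_of_radial [Nontrivial E] (hf : ∀ r > 0, HasDerivAt f (D r) r)
    (hdiff : ∀ x : E, x ≠ 0 → DifferentiableAt ℝ (pFlux p fun y : E => f ‖y‖) x)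
    (hsolve : ∀ x : E, x ≠ 0 → SolvesAt p q (fun y : E => f ‖y‖) x) {r : ℝ} (hr : 0 < r) :
    HasDerivAt (fun r => |D r| ^ (p - 2) * D r)
      (|D r| ^ q - (finrank ℝ E - 1) / r * (|D r| ^ (p - 2) * D r)) r := by
  set W : ℝ → ℝ := fun r => |D r| ^ (p - 2) * D r
  obtain ⟨x, rfl⟩ := exists_norm_eq E hr.le
  have hx : x ≠ 0 := norm_pos_iff.1 hr
  have hgrad (y : E) (hy : y ≠ 0) : ∇ (fun y : E => f ‖y‖) y = (D ‖y‖ / ‖y‖) • y :=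
    gradient_comp_norm hy (hf _ (norm_pos_iff.2 hy))
  have hgradnorm (y : E) (hy : y ≠ 0) : ‖∇ (fun y : E => f ‖y‖) y‖ = |D ‖y‖| := by
    rw [hgrad y hy, norm_smul, norm_div, norm_norm, div_mul_cancel₀ _ (norm_ne_zero_iff.2 hy),
      Real.norm_eq_abs]
  have hflux : pFlux p (fun y : E => f ‖y‖) =ᶠ[𝓝 x] fun y => (W ‖y‖ / ‖y‖) • y := by
    filter_upwards [isOpen_ne.mem_nhds hx] with y hy
    rw [pFlux, hgradnorm y hy, hgrad y hy, smul_smul, mul_div_assoc]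
  have hWdiff : DifferentiableAt ℝ W ‖x‖ :=
    differentiableAt_of_radial_smul hx ((hdiff x hx).congr_of_eventuallyEq hflux.symm)
  have heq := (hsolve x hx).2.2
  rw [pLaplacian, hflux.fderiv_eq, traceCLM_fderiv_radial hx hWdiff.hasDerivAt,
    hgradnorm x hx] at heq
  exact hWdiff.hasDerivAt.congr_deriv (eq_sub_of_add_eq heq)

end Radial

section Profile

variable {n p q r C M : ℝ} {f D : ℝ → ℝ}

/-- The constant `b` of the classification, positive exactly in the subcritical range of `q`. -/
noncomputable def criticalConst (n p q : ℝ) : ℝ := (n * (p - 1) - (n - 1) * q) / (q + 1 - p)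

/-- The integrand `-f'` of a nonconstant radial profile `f`; the integration constant `C` is
`k^(p-1-q)` in the regular family and `0` for the explicit power solution. -/
noncomputable def profileSpeed (n p q C s : ℝ) : ℝ :=
  s ^ ((1 - n) / (p - 1)) *
    ((criticalConst n p q)⁻¹ * s ^ ((q + 1 - p) * criticalConst n p q / (p - 1)) + C) ^
      (-(1 / (q + 1 - p)))

lemma criticalConst_mul (hq : p - 1 < q) :
    (q + 1 - p) * criticalConst n p q = n * (p - 1) - (n - 1) * q :=
  mul_div_cancel₀ _ (by linarith)

lemma abs_abs_rpow_mul_self (hp : 1 < p) (a : ℝ) : |(|a| ^ (p - 2) * a)| = |a| ^ (p - 1) := by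
  rw [abs_mul, abs_of_nonneg (by positivity), ← Real.rpow_add_one' (abs_nonneg a) (by linarith)]
  congr 1
  ring

lemma hasDerivAt_rpow_mul_flux (hp : 1 < p) (hq : p - 1 < q) (hr : 0 < r)
    (hD : HasDerivAt (fun r => |D r| ^ (p - 2) * D r)
      (|D r| ^ q - (n - 1) / r * (|D r| ^ (p - 2) * D r)) r) :
    HasDerivAt (fun r => r ^ (n - 1) * (|D r| ^ (p - 2) * D r))
      (r ^ ((q + 1 - p) * criticalConst n p q / (p - 1) - 1) *
        |r ^ (n - 1) * (|D r| ^ (p - 2) * D r)| ^ (1 + (q + 1 - p) / (p - 1))) r := by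
  have hp' : 0 < p - 1 := sub_pos.2 hp
  have hexp : (p - 1) * (1 + (q + 1 - p) / (p - 1)) = q := by
    field_simp
    ring
  have hpow : r ^ ((q + 1 - p) * criticalConst n p q / (p - 1) - 1) *
      r ^ ((n - 1) * (1 + (q + 1 - p) / (p - 1))) = r ^ (n - 1) := by
    rw [← Real.rpow_add hr, criticalConst_mul hq]
    congr 1
    field_simp
    ring
  refine ((Real.hasDerivAt_rpow_const (p := n - 1) (Or.inl hr.ne')).fun_mul hD).congr_deriv ?_
  rw [abs_mul, abs_of_pos (Real.rpow_pos_of_pos hr (n - 1)), abs_abs_rpow_mul_self hp,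
    Real.mul_rpow (by positivity) (by positivity), ← Real.rpow_mul (abs_nonneg _), hexp,
    ← Real.rpow_mul hr.le, ← mul_assoc _ _ (|D r| ^ q), hpow, Real.rpow_sub_one hr.ne']
  field_simp
  ring

lemma eq_neg_profileSpeed (hp : 1 < p) (hq : p - 1 < q) (hr : 0 < r) {d : ℝ}
    (hneg : r ^ (n - 1) * (|d| ^ (p - 2) * d) < 0)
    (h : (-(r ^ (n - 1) * (|d| ^ (p - 2) * d))) ^ (-((q + 1 - p) / (p - 1))) =
      C + (criticalConst n p q)⁻¹ * r ^ ((q + 1 - p) * criticalConst n p q / (p - 1))) :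
    d = -profileSpeed n p q C r := by
  have hp' : 0 < p - 1 := sub_pos.2 hp
  have hτ : 0 < q + 1 - p := by linarith
  have hd : 0 < -d := by
    by_contra! hd
    have : 0 ≤ d := neg_nonpos.1 hd
    exact hneg.not_ge (by positivity)
  have habs : -(r ^ (n - 1) * (|d| ^ (p - 2) * d)) = r ^ (n - 1) * (-d) ^ (p - 1) := by
    rw [← abs_of_neg hneg, abs_mul, abs_of_nonneg (by positivity), abs_abs_rpow_mul_self hp,
      abs_of_neg (neg_pos.1 hd)]
  rw [profileSpeed, add_comm _ C, ← h, habs, ← Real.rpow_mul (by positivity),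
    show -((q + 1 - p) / (p - 1)) * -(1 / (q + 1 - p)) = 1 / (p - 1) by field_simp,
    Real.mul_rpow (by positivity) (by positivity), ← Real.rpow_mul hr.le, ← Real.rpow_mul hd.le,
    mul_one_div_cancel hp'.ne', Real.rpow_one, ← mul_assoc, ← Real.rpow_add hr,
    show (1 - n) / (p - 1) + (n - 1) * (1 / (p - 1)) = 0 by ring, Real.rpow_zero, one_mul, neg_neg]

lemma deriv_profile_eq_zero_or (hp : 1 < p) (hq : p - 1 < q) (hb : 0 < criticalConst n p q)
    (hD : ∀ r > 0, HasDerivAt (fun r => |D r| ^ (p - 2) * D r)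
      (|D r| ^ q - (n - 1) / r * (|D r| ^ (p - 2) * D r)) r) :
    (∀ r > 0, D r = 0) ∨ ∃ C ≥ 0, ∀ r > 0, D r = -profileSpeed n p q C r := by
  have hp' : 0 < p - 1 := sub_pos.2 hp
  have hτ : 0 < q + 1 - p := by linarith
  rcases eq_zero_or_rpow_neg_eq_of_hasDerivAt_mul_abs_rpow (div_pos hτ hp')
    (div_pos (mul_pos hτ hb) hp') fun r hr => hasDerivAt_rpow_mul_flux hp hq hr (hD r hr) with
    hzero | ⟨hneg, C, hC, h⟩
  · refine Or.inl fun r hr => ?_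
    have hflux := (mul_eq_zero_iff_left (Real.rpow_pos_of_pos hr (n - 1)).ne').1 (hzero r hr)
    have habs := abs_abs_rpow_mul_self hp (D r)
    rw [hflux, abs_zero, eq_comm, Real.rpow_eq_zero (abs_nonneg _) hp'.ne'] at habs
    exact abs_eq_zero.1 habs
  · refine Or.inr ⟨C, hC, fun r hr => eq_neg_profileSpeed hp hq hr (hneg r hr) ?_⟩
    rw [h r hr]
    congr 2
    field_simp

lemma profileSpeed_zero (hp : 1 < p) (hq : p - 1 < q) (hb : 0 < criticalConst n p q)
    (hr : 0 < r) : profileSpeed n p q 0 r =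
      criticalConst n p q ^ (1 / (q + 1 - p)) * r ^ (-((p - q) / (q + 1 - p)) - 1) := by
  have hp' : 0 < p - 1 := sub_pos.2 hp
  have hτ : 0 < q + 1 - p := by linarith
  rw [profileSpeed, add_zero, Real.mul_rpow (by positivity) (by positivity),
    Real.inv_rpow hb.le, Real.rpow_neg hb.le, inv_inv, ← Real.rpow_mul hr.le, mul_left_comm,
    ← Real.rpow_add hr, criticalConst_mul hq]
  congr 2
  field_simp
  ring

lemma profile_eq_power (hp : 1 < p) (hq : p - 1 < q) (hqp : q < p)
    (hb : 0 < criticalConst n p q) (hf : ∀ r > 0, HasDerivAt f (-profileSpeed n p q 0 r) r)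
    (hM : Tendsto f atTop (𝓝 M)) (hr : 0 < r) :
    f r = ((p - q) / (q + 1 - p))⁻¹ * criticalConst n p q ^ (1 / (q + 1 - p)) *
      r ^ (-((p - q) / (q + 1 - p))) + M := by
  have hβ : 0 < (p - q) / (q + 1 - p) := div_pos (sub_pos.2 hqp) (by linarith)
  have hspeed (t : ℝ) (ht : 0 < t) := profileSpeed_zero hp hq hb ht
  set β := (p - q) / (q + 1 - p)
  set B := criticalConst n p q ^ (1 / (q + 1 - p))
  refine eq_of_hasDerivAt_eq_of_tendsto hf (fun t ht => ?_) hM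
    (g := fun t => β⁻¹ * B * t ^ (-β) + M) ?_ hr
  · refine (((Real.hasDerivAt_rpow_const (Or.inl ht.ne')).const_mul (β⁻¹ * B)).add_const
      M).congr_deriv ?_
    rw [hspeed t ht]
    field_simp
  · simpa using ((tendsto_rpow_neg_atTop hβ).const_mul (β⁻¹ * B)).add_const M

lemma profile_eq_integral (hb : 0 < criticalConst n p q) (hC : 0 ≤ C)
    (hf : ∀ r > 0, HasDerivAt f (-profileSpeed n p q C r) r) (hM : Tendsto f atTop (𝓝 M))
    (hr : 0 < r) : f r = (∫ s in Ioi r, profileSpeed n p q C s) + M := by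
  have hint := integral_Ioi_of_hasDerivAt_of_nonpos' (fun t ht => hf t (hr.trans_le ht))
    (fun t ht => ?_) hM
  · rw [integral_neg] at hint
    linarith
  · have : 0 < t := hr.trans ht
    rw [neg_nonpos, profileSpeed]
    positivity

theorem profile_classification (hp : 1 < p) (hq : p - 1 < q) (hqp : q < p)
    (hb : 0 < criticalConst n p q) (hf : ∀ r > 0, HasDerivAt f (D r) r)
    (hD : ∀ r > 0, HasDerivAt (fun r => |D r| ^ (p - 2) * D r)
      (|D r| ^ q - (n - 1) / r * (|D r| ^ (p - 2) * D r)) r)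
    (hM : Tendsto f atTop (𝓝 M)) :
    (∀ r > 0, f r = M) ∨
    (∃ k > 0, ∀ r > 0, f r = (∫ s in Ioi r, profileSpeed n p q (k ^ (p - 1 - q)) s) + M) ∨
    (∀ r > 0, f r = ((p - q) / (q + 1 - p))⁻¹ * criticalConst n p q ^ (1 / (q + 1 - p)) *
      r ^ (-((p - q) / (q + 1 - p))) + M) := by
  rcases deriv_profile_eq_zero_or hp hq hb hD with hzero | ⟨C, hC, hspeed⟩
  · exact Or.inl fun r hr => eq_of_hasDerivAt_eq_of_tendsto (g := fun _ => M)
      (fun t ht => hzero t ht ▸ hf t ht) (fun t _ => hasDerivAt_const t M) hM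
      tendsto_const_nhds hr
  have hf' (r : ℝ) (hr : 0 < r) := hspeed r hr ▸ hf r hr
  rcases hC.eq_or_lt with rfl | hC
  · exact Or.inr (Or.inr fun r hr => profile_eq_power hp hq hqp hb hf' hM hr)
  · have hk : (C ^ (p - 1 - q)⁻¹) ^ (p - 1 - q) = C :=
      Real.rpow_inv_rpow hC.le (by linarith)
    refine Or.inr (Or.inl ⟨C ^ (p - 1 - q)⁻¹, by positivity, fun r hr => ?_⟩)
    rw [hk]
    exact profile_eq_integral hb hC.le hf' hM hr

end Profile

section Classification

variable {E : Type*} [NormedAddCommGroup E] [InnerProductSpace ℝ E] [FiniteDimensional ℝ E]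
  {n p q : ℝ} {u : E → ℝ}

lemma lt_of_lt_critical (hn : 1 < n) (hpn : p < n) (hqc : q < n * (p - 1) / (n - 1)) : q < p := by
  rw [lt_div_iff₀ (sub_pos.2 hn)] at hqc
  by_contra! hpq
  linarith [mul_le_mul_of_nonneg_right hpq (sub_pos.2 hn).le]

lemma criticalConst_pos (hn : 1 < n) (hq : p - 1 < q) (hqc : q < n * (p - 1) / (n - 1)) :
    0 < criticalConst n p q := by
  rw [lt_div_iff₀ (sub_pos.2 hn)] at hqc
  exact div_pos (by linarith) (by linarith)

lemma exists_nonneg_tendsto_cocompact (hn : 1 < finrank ℝ E) (hp : 1 < p) (hq : p - 1 < q)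
    (hqp : q < p) (hu : ∀ x ≠ 0, SolvesAt p q u x) (hpos : ∀ x ≠ 0, 0 ≤ u x) :
    ∃ M ≥ 0, Tendsto u (cocompact E) (𝓝 M) := by
  have hτ : 0 < q + 1 - p := by linarith
  obtain ⟨K, hK, hgrad⟩ := exists_norm_gradient_le_norm_rpow hn hp hq
  have hexp : -((p - q) / (q + 1 - p)) - 1 = -(1 / (q + 1 - p)) := by
    field_simp
    ring
  obtain ⟨M, hM⟩ := exists_tendsto_cocompact hn (div_pos (sub_pos.2 hqp) hτ) hK.le
    (fun x hx => (hu x hx).1.differentiableAt one_ne_zero)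
    (fun x hx => hexp ▸ hgrad u hu hpos x hx)
  have : Nontrivial E := Module.nontrivial_of_finrank_pos (R := ℝ) (by lia)
  have := NormedSpace.noncompactSpace ℝ E
  refine ⟨M, ge_of_tendsto hM ?_, hM⟩
  filter_upwards [isCompact_singleton.compl_mem_cocompact] with x hx using hpos x hx

theorem radial_classification [Nontrivial E] {f : ℝ → ℝ} {M : ℝ} (hp : 1 < p) (hq : p - 1 < q)
    (hqp : q < p) (hb : 0 < criticalConst (finrank ℝ E) p q)
    (hdiff : ∀ x : E, x ≠ 0 → DifferentiableAt ℝ (pFlux p fun y : E => f ‖y‖) x)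
    (hsolve : ∀ x : E, x ≠ 0 → SolvesAt p q (fun y : E => f ‖y‖) x)
    (hM : Tendsto (fun y : E => f ‖y‖) (cocompact E) (𝓝 M)) :
    (∀ r > 0, f r = M) ∨
    (∃ k > 0, ∀ r > 0,
      f r = (∫ s in Ioi r, profileSpeed (finrank ℝ E) p q (k ^ (p - 1 - q)) s) + M) ∨
    (∀ r > 0, f r = ((p - q) / (q + 1 - p))⁻¹ *
      criticalConst (finrank ℝ E) p q ^ (1 / (q + 1 - p)) *
        r ^ (-((p - q) / (q + 1 - p))) + M) := by
  have hf (r : ℝ) (hr : 0 < r) : HasDerivAt f (deriv f r) r := by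
    obtain ⟨x, rfl⟩ := exists_norm_eq E hr.le
    have hx : x ≠ 0 := norm_pos_iff.1 hr
    exact (differentiableAt_of_comp_norm hx
      ((hsolve x hx).1.differentiableAt one_ne_zero)).hasDerivAt
  exact profile_classification hp hq hqp hb hf
    (fun r hr => hasDerivAt_flux_of_radial hf hdiff hsolve hr) (tendsto_of_comp_norm hM)

theorem eq_of_norm_eq (hn : 1 < finrank ℝ E) (hp : 1 < p) (hpn : p < finrank ℝ E)
    (hq : p - 1 < q) (hqp : q < p) (hu : ∀ x ≠ 0, SolvesAt p q u x) (hpos : ∀ x ≠ 0, 0 ≤ u x)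
    {x y : E} (hxy : ‖x‖ = ‖y‖) : u x = u y := by
  have : Nontrivial E := Module.nontrivial_of_finrank_pos (R := ℝ) (by lia)
  obtain ⟨M, hM₀, hM⟩ := exists_nonneg_tendsto_cocompact hn hp hq hqp hu hpos
  rcases tendsto_atTop_or_forall_eq hn hp hpn hq hqp hu hpos hM with h0 | hconst
  · exact eq_of_norm_eq_of_tendsto_atTop hp hq hu hpos hM₀ hM h0 hxy
  · rcases eq_or_ne x 0 with rfl | hx
    · rw [norm_zero, eq_comm, norm_eq_zero] at hxy
      rw [hxy]
    · rw [hconst x hx, hconst y (norm_pos_iff.1 (hxy ▸ norm_pos_iff.2 hx))]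

theorem global_classification_general (hn : 2 ≤ finrank ℝ E) (hp : 1 < p)
    (hpn : p < finrank ℝ E) (hq : p - 1 < q)
    (hqc : q < (finrank ℝ E : ℝ) * (p - 1) / ((finrank ℝ E : ℝ) - 1))
    (hdiff : ∀ x ≠ 0, DifferentiableAt ℝ (pFlux p u) x) (hu : ∀ x ≠ 0, SolvesAt p q u x)
    (hpos : ∀ x ≠ 0, 0 ≤ u x) :
    (∀ x y : E, ‖x‖ = ‖y‖ → u x = u y) ∧
    ((∃ M ≥ 0, ∀ x ≠ 0, u x = M) ∨
     (∃ k > 0, ∃ M ≥ 0, ∀ x ≠ 0,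
        u x = (∫ s in Ioi ‖x‖, profileSpeed (finrank ℝ E) p q (k ^ (p - 1 - q)) s) + M) ∨
     (∃ M ≥ 0, ∀ x ≠ 0, u x = ((p - q) / (q + 1 - p))⁻¹ *
        criticalConst (finrank ℝ E) p q ^ (1 / (q + 1 - p)) *
          ‖x‖ ^ (-((p - q) / (q + 1 - p))) + M)) := by
  have : Nontrivial E := Module.nontrivial_of_finrank_pos (R := ℝ) (by lia)
  have hn' : (1 : ℝ) < finrank ℝ E := Nat.one_lt_cast.2 hn
  have hqp := lt_of_lt_critical hn' hpn hqc
  have hradial (x y : E) (hxy : ‖x‖ = ‖y‖) : u x = u y :=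
    eq_of_norm_eq hn hp hpn hq hqp hu hpos hxy
  obtain ⟨M, hM₀, hM⟩ := exists_nonneg_tendsto_cocompact hn hp hq hqp hu hpos
  refine ⟨hradial, ?_⟩
  obtain ⟨f, rfl⟩ : ∃ f : ℝ → ℝ, u = fun x => f ‖x‖ := by
    obtain ⟨e, he⟩ := exists_norm_eq E zero_le_one
    refine ⟨fun r => u (r • e), funext fun x => hradial _ _ ?_⟩
    rw [norm_smul, norm_norm, he, mul_one]
  rcases radial_classification hp hq hqp (criticalConst_pos hn' hq hqc) hdiff hu hM with
    h | ⟨k, hk, h⟩ | h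
  · exact Or.inl ⟨M, hM₀, fun x hx => h _ (norm_pos_iff.2 hx)⟩
  · exact Or.inr (Or.inl ⟨k, hk, M, hM₀, fun x hx => h _ (norm_pos_iff.2 hx)⟩)
  · exact Or.inr (Or.inr ⟨M, hM₀, fun x hx => h _ (norm_pos_iff.2 hx)⟩)

end Classification

lemma IsStrongSolution.solvesAt {N : ℕ} {p q : ℝ} {G : Set (EuclideanSpace ℝ (Fin N))}
    {u : EuclideanSpace ℝ (Fin N) → ℝ} {x : EuclideanSpace ℝ (Fin N)} (hG : IsOpen G)
    (hu : IsStrongSolution p q G u) (hx : x ∈ G) : SolvesAt p q u x := by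
  have hu₁ : ContDiffAt ℝ 1 u x := hu.1.contDiffAt (hG.mem_nhds hx)
  refine ⟨hu₁, fun h0 => hu.2.1.contDiffAt ?_, (hu.2.2 x hx).2⟩
  filter_upwards [hG.mem_nhds hx, eventually_gradient_ne hu₁ h0] with y hy hy0 using ⟨hy, hy0⟩

/-- Classification of nonnegative solutions of (E) on `ℝ^N ∖ {0}`: such solutions are
radial and given by one of three explicit families. -/
theorem global_classification (N : ℕ) (hN : 2 ≤ N) (p q : ℝ) (hp1 : 1 < p) (hpN : p < N)
    (hq1 : p - 1 < q) (hq2 : q < (N : ℝ) * (p - 1) / ((N : ℝ) - 1))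
    (u : EuclideanSpace ℝ (Fin N) → ℝ)
    (hu : IsStrongSolution p q ({(0 : EuclideanSpace ℝ (Fin N))}ᶜ) u)
    (hpos : ∀ x : EuclideanSpace ℝ (Fin N), x ≠ 0 → 0 ≤ u x) :
    (∀ x y : EuclideanSpace ℝ (Fin N), ‖x‖ = ‖y‖ → u x = u y) ∧
    ((∃ M : ℝ, 0 ≤ M ∧ ∀ x : EuclideanSpace ℝ (Fin N), x ≠ 0 → u x = M) ∨
     (∃ k > (0 : ℝ), ∃ M ≥ (0 : ℝ), ∀ x : EuclideanSpace ℝ (Fin N), x ≠ 0 →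
        u x = (∫ s in Set.Ioi ‖x‖,
            s ^ ((1 - (N : ℝ)) / (p - 1)) *
              ((((N : ℝ) * (p - 1) - ((N : ℝ) - 1) * q) / (q + 1 - p))⁻¹
                  * s ^ ((q + 1 - p) * (((N : ℝ) * (p - 1) - ((N : ℝ) - 1) * q) / (q + 1 - p))
                      / (p - 1))
                + k ^ (p - 1 - q)) ^ (-(1 / (q + 1 - p)))) + M) ∨
     (∃ M ≥ (0 : ℝ), ∀ x : EuclideanSpace ℝ (Fin N), x ≠ 0 →
        u x = ((p - q) / (q + 1 - p))⁻¹
            * (((N : ℝ) * (p - 1) - ((N : ℝ) - 1) * q) / (q + 1 - p)) ^ (1 / (q + 1 - p))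
            * ‖x‖ ^ (-((p - q) / (q + 1 - p))) + M)) := by
  have h := global_classification_general (u := u) (by rwa [finrank_euclideanSpace_fin]) hp1
    (by rwa [finrank_euclideanSpace_fin]) hq1 (by rwa [finrank_euclideanSpace_fin])
    (fun x hx => (hu.2.2 x hx).1) (fun x hx => hu.solvesAt isOpen_compl_singleton hx) hpos
  rwa [finrank_euclideanSpace_fin] at h
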